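/- arXiv:1410.7894 — 7 statements merged into one kernel-verified Lean document; each statement's English description precedes it below -/
import Mathlib

section
/- Let G be a group, L a field of characteristic different from 2, and σ : G → GSp₄(L) a group homomorphism such that the composite ι∘σ : G → GL₄(L) is reducible, i.e. there exists an L-subspace W of L⁴ with 0 < dim W < 4 that is invariant under σ(g) for every g ∈ G. Then there exists T ∈ GL₄(L) such that Tσ(g)T⁻¹ lies, for every g ∈ G, in one of the subgroups B(L), P(L), Q(L), H(L) (which one depending on the irreducible constituents of ι∘σ). -/
/-!
Write `ω(x, y) = xᵀ J y`. If a subspace `U` is stable under a group of symplectic similitudes, so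
is `U^⊥`: `ω(u, g v) = ν(g) ω(g⁻¹ u, v)`. Hence the radical `R = W ∩ W^⊥` of the stable subspace
`W` is stable, and three cases arise.

* `R = 0`: the space is the orthogonal sum of the stable nonzero subspaces `W` and `W^⊥`. Taking
  `e₁, e₄ ∈ W` and `e₂, e₃ ∈ W^⊥` puts the group into `H`.
* `R` is a line: taking `e₁ ∈ R` puts the group into `Q`, as the line and its orthogonal are stable.
* `R` contains two independent vectors: taking them as `e₁, e₂` puts the group into `P`, because
  `R` is stable and totally isotropic.

In each case the vectors are completed to a symplectic basis. In such a basis `(eᵢ)` the `(i, j)`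
entry of `g` is, up to sign, `ω(e_{5-i}, g e_j)`, so the required zeros are orthogonality relations
(`exists_conj`).
-/

open Matrix

/-- The matrix `J` defining `GSp₄`: `s = [[0,1],[1,0]]`, `J = [[0,s],[-s,0]]`. -/
def J4 (L : Type*) [Field L] : Matrix (Fin 4) (Fin 4) L :=
  !![0, 0, 0, 1; 0, 0, 1, 0; 0, -1, 0, 0; -1, 0, 0, 0]

/-- Membership in `GSp₄(L)`: `mᵀ J m = ν • J` for some `ν ∈ L×`. -/
def InGSp4 {L : Type*} [Field L] (m : Matrix (Fin 4) (Fin 4) L) : Prop :=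
  ∃ ν : Lˣ, mᵀ * J4 L * m = (ν : L) • J4 L

/-- Borel shape: upper triangular. -/
def InB {L : Type*} [Field L] (m : Matrix (Fin 4) (Fin 4) L) : Prop :=
  ∀ i j : Fin 4, (j : ℕ) < (i : ℕ) → m i j = 0

/-- Siegel parabolic shape: `m i j = 0` for `i ∈ {3,4}`, `j ∈ {1,2}` (1-indexed). -/
def InP {L : Type*} [Field L] (m : Matrix (Fin 4) (Fin 4) L) : Prop :=
  ∀ i j : Fin 4, 2 ≤ (i : ℕ) → (j : ℕ) ≤ 1 → m i j = 0

/-- Klingen parabolic shape. -/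
def InQ {L : Type*} [Field L] (m : Matrix (Fin 4) (Fin 4) L) : Prop :=
  m 1 0 = 0 ∧ m 2 0 = 0 ∧ m 3 0 = 0 ∧ m 3 1 = 0 ∧ m 3 2 = 0

/-- Endoscopic subgroup shape: zero outside the indicated eight entries. -/
def InH {L : Type*} [Field L] (m : Matrix (Fin 4) (Fin 4) L) : Prop :=
  ∀ i j : Fin 4,
    ¬(((i = 0 ∨ i = 3) ∧ (j = 0 ∨ j = 3)) ∨ ((i = 1 ∨ i = 2) ∧ (j = 1 ∨ j = 2))) →
      m i j = 0

/-- The conjugate `T g T⁻¹`, as a matrix. -/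
def conj4 {L : Type*} [Field L] (T g : (Matrix (Fin 4) (Fin 4) L)ˣ) :
    Matrix (Fin 4) (Fin 4) L :=
  ((T * g * T⁻¹ : (Matrix (Fin 4) (Fin 4) L)ˣ) : Matrix (Fin 4) (Fin 4) L)

/-- The symplectic form `ω(x, y) = xᵀ J y`. -/
noncomputable def sympForm (L : Type*) [Field L] : LinearMap.BilinForm L (Fin 4 → L) :=
  Matrix.toBilin' (J4 L)

section

variable {L : Type*} [Field L]

lemma sympForm_apply (x y : Fin 4 → L) :
    sympForm L x y = x 0 * y 3 + x 1 * y 2 - x 2 * y 1 - x 3 * y 0 := by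
  simp [sympForm, Matrix.toBilin'_apply', J4, dotProduct, Matrix.mulVec, Fin.sum_univ_four]
  ring

lemma sympForm_swap (x y : Fin 4 → L) : sympForm L x y = - sympForm L y x := by
  simp only [sympForm_apply]; ring

lemma sympForm_self (x : Fin 4 → L) : sympForm L x x = 0 := by
  simp only [sympForm_apply]; ring

lemma sympForm_isRefl : (sympForm L).IsRefl := by
  intro x y h
  rw [sympForm_swap, h, neg_zero]

lemma J4_mul_J4 : J4 L * J4 L = -1 := by
  ext i j
  fin_cases i <;> fin_cases j <;> simp [J4, Matrix.mul_apply, Fin.sum_univ_four]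

lemma sympForm_nondegenerate : (sympForm L).Nondegenerate := by
  apply LinearMap.BilinForm.nondegenerate_toBilin'_of_det_ne_zero'
  intro h
  have := congrArg Matrix.det (J4_mul_J4 (L := L))
  rw [Matrix.det_mul, h, Matrix.det_neg] at this
  norm_num at this

/-- A similitude scales the form by its multiplier. -/
lemma sympForm_mulVec {m : Matrix (Fin 4) (Fin 4) L} {ν : L}
    (h : mᵀ * J4 L * m = ν • J4 L) (x y : Fin 4 → L) :
    sympForm L (m *ᵥ x) (m *ᵥ y) = ν * sympForm L x y := by
  simp only [sympForm, Matrix.toBilin'_apply']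
  have : x ⬝ᵥ ((mᵀ * J4 L * m) *ᵥ y) = x ⬝ᵥ ((ν • J4 L) *ᵥ y) := by rw [h]
  rw [Matrix.smul_mulVec, dotProduct_smul, smul_eq_mul] at this
  rw [← this, ← Matrix.mulVec_mulVec, ← Matrix.mulVec_mulVec, Matrix.dotProduct_mulVec x,
    Matrix.vecMul_transpose]

/-- The orthogonal of a stable subspace is stable. -/
lemma orthogonal_stable {G : Type*} [Group G] (σ : G →* (Matrix (Fin 4) (Fin 4) L)ˣ)
    (hσ : ∀ g : G, InGSp4 ((σ g : Matrix (Fin 4) (Fin 4) L)))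
    {U : Submodule L (Fin 4 → L)}
    (hU : ∀ g : G, ∀ v ∈ U, (σ g : Matrix (Fin 4) (Fin 4) L) *ᵥ v ∈ U)
    (g : G) (v : Fin 4 → L) (hv : v ∈ (sympForm L).orthogonal U) :
    (σ g : Matrix (Fin 4) (Fin 4) L) *ᵥ v ∈ (sympForm L).orthogonal U := by
  rw [LinearMap.BilinForm.mem_orthogonal_iff] at hv ⊢
  intro u hu
  obtain ⟨ν, hν⟩ := hσ g
  have h1 := sympForm_mulVec hν ((σ g⁻¹ : Matrix (Fin 4) (Fin 4) L) *ᵥ u) v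
  rw [hv _ (hU g⁻¹ u hu), mul_zero, Matrix.mulVec_mulVec, map_inv, Units.mul_inv,
    Matrix.one_mulVec] at h1
  exact h1

/-- Conjugating by the inverse of the matrix with columns a symplectic basis `s` preserves
`GSp₄`, and the `(i, j)` entry of the conjugate is `±ω(s_{3-i}, g s_j)` (indices from `0`). -/
lemma exists_conj (s : Fin 4 → Fin 4 → L) (hs : ∀ i j, sympForm L (s i) (s j) = J4 L i j) :
    ∃ T : (Matrix (Fin 4) (Fin 4) L)ˣ, ∀ g : (Matrix (Fin 4) (Fin 4) L)ˣ,
      InGSp4 (g : Matrix (Fin 4) (Fin 4) L) → InGSp4 (conj4 T g) ∧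
      ∀ i j, sympForm L (s i.rev) ((g : Matrix (Fin 4) (Fin 4) L) *ᵥ s j) = 0 →
        conj4 T g i j = 0 := by
  set S : Matrix (Fin 4) (Fin 4) L := (Matrix.of s)ᵀ with hS
  have hSJS : Sᵀ * J4 L * S = J4 L := by
    ext i j
    rw [← hs i j, sympForm_apply, hS, transpose_transpose]
    simp [Matrix.mul_apply, J4, Fin.sum_univ_four]
    ring
  have hTS : (-(J4 L) * Sᵀ * J4 L) * S = 1 := by
    rw [Matrix.mul_assoc, Matrix.mul_assoc, ← Matrix.mul_assoc Sᵀ, hSJS, Matrix.neg_mul,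
      J4_mul_J4, neg_neg]
  have hST := mul_eq_one_comm.mp hTS
  set T : (Matrix (Fin 4) (Fin 4) L)ˣ := ⟨-(J4 L) * Sᵀ * J4 L, S, hTS, hST⟩ with hT
  have hval : (T : Matrix (Fin 4) (Fin 4) L) * S = 1 := hTS
  have hval' : S * (T : Matrix (Fin 4) (Fin 4) L) = 1 := hST
  have hTt : (T : Matrix (Fin 4) (Fin 4) L)ᵀ * Sᵀ = 1 := by
    rw [← transpose_mul, hval', transpose_one]
  have hTJT : (T : Matrix (Fin 4) (Fin 4) L)ᵀ * J4 L * T = J4 L := by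
    calc (T : Matrix (Fin 4) (Fin 4) L)ᵀ * J4 L * T
        = ((T : Matrix (Fin 4) (Fin 4) L)ᵀ * Sᵀ) * J4 L * (S * T) := by
          conv_lhs => rw [← hSJS]
          simp only [Matrix.mul_assoc]
      _ = J4 L := by rw [hTt, hval', Matrix.one_mul, Matrix.mul_one]
  refine ⟨T, fun g hg => ⟨?_, ?_⟩⟩
  · obtain ⟨ν, hν⟩ := hg
    refine ⟨ν, ?_⟩
    have hc : conj4 T g = T * g * S := rfl
    calc (conj4 T g)ᵀ * J4 L * conj4 T g
        = Sᵀ * ((g : Matrix (Fin 4) (Fin 4) L)ᵀ *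
            ((T : Matrix (Fin 4) (Fin 4) L)ᵀ * J4 L * T) * g) * S := by
          rw [hc]
          simp only [transpose_mul, Matrix.mul_assoc]
      _ = (ν : L) • J4 L := by
          rw [hTJT, hν, Matrix.mul_smul, Matrix.smul_mul, hSJS]
  · intro i j hij
    have hc : conj4 T g = -(J4 L) * (Sᵀ * J4 L * (g * S)) := by
      change (-(J4 L) * Sᵀ * J4 L) * g * S = _
      simp only [Matrix.mul_assoc]
    have hM : ∀ k, (Sᵀ * J4 L * (g * S)) k j
        = sympForm L (s k) ((g : Matrix (Fin 4) (Fin 4) L) *ᵥ s j) := by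
      intro k
      have hcol : ∀ l, ((g : Matrix (Fin 4) (Fin 4) L) * S) l j
          = ((g : Matrix (Fin 4) (Fin 4) L) *ᵥ s j) l := fun l => rfl
      rw [sympForm_apply, Matrix.mul_apply]
      simp only [hcol]
      simp [hS, Matrix.mul_apply, J4, Fin.sum_univ_four]
      ring
    rw [← hM] at hij
    rw [hc, Matrix.mul_apply]
    fin_cases i <;> simpa [J4, Fin.sum_univ_four, Fin.rev] using hij

/-- A hyperbolic pair `(u, z)` and an orthogonal hyperbolic pair `(v, w)` form a symplectic
basis `u, v, w, z`. -/
lemma symp_basis {u v w z : Fin 4 → L} (huz : sympForm L u z = 1) (hvw : sympForm L v w = 1)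
    (huv : sympForm L u v = 0) (huw : sympForm L u w = 0)
    (hzv : sympForm L z v = 0) (hzw : sympForm L z w = 0) (i j : Fin 4) :
    sympForm L (![u, v, w, z] i) (![u, v, w, z] j) = J4 L i j := by
  have hzu : sympForm L z u = -1 := by rw [sympForm_swap, huz]
  have hwv : sympForm L w v = -1 := by rw [sympForm_swap, hvw]
  have hvu : sympForm L v u = 0 := by rw [sympForm_swap, huv, neg_zero]
  have hwu : sympForm L w u = 0 := by rw [sympForm_swap, huw, neg_zero]
  have hvz : sympForm L v z = 0 := by rw [sympForm_swap, hzv, neg_zero]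
  have hwz : sympForm L w z = 0 := by rw [sympForm_swap, hzw, neg_zero]
  fin_cases i <;> fin_cases j <;> simp [J4, sympForm_self, *]

lemma orthogonal_orthogonal_symp (U : Submodule L (Fin 4 → L)) :
    (sympForm L).orthogonal ((sympForm L).orthogonal U) = U :=
  LinearMap.BilinForm.orthogonal_orthogonal sympForm_nondegenerate sympForm_isRefl U

/-- A vector outside `U^⊥` pairs to `1` with some vector of `U`. -/
lemma exists_pair_one {U : Submodule L (Fin 4 → L)} {u : Fin 4 → L}
    (hu : u ∉ (sympForm L).orthogonal U) : ∃ z ∈ U, sympForm L u z = 1 := by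
  rw [LinearMap.BilinForm.mem_orthogonal_iff] at hu
  push Not at hu
  obtain ⟨z, hz, hzu⟩ := hu
  have huz : sympForm L u z ≠ 0 := by rwa [sympForm_swap, neg_ne_zero]
  exact ⟨(sympForm L u z)⁻¹ • z, U.smul_mem _ hz, by simp [huz]⟩

lemma orthogonal_ne_bot {U : Submodule L (Fin 4 → L)} (hU : Module.finrank L U < 4) :
    (sympForm L).orthogonal U ≠ ⊥ := by
  intro h
  have h1 := orthogonal_orthogonal_symp U
  rw [h, LinearMap.BilinForm.orthogonal_bot] at h1
  rw [← h1, finrank_top] at hU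
  simp at hU

/-- A hyperbolic pair `(u, z)` and a nonzero vector `v` orthogonal to it extend to a symplectic
basis. -/
lemma exists_fourth {u z v : Fin 4 → L} (huz : sympForm L u z = 1)
    (huv : sympForm L u v = 0) (hzv : sympForm L z v = 0) (hv : v ≠ 0) :
    ∃ w, ∀ i j, sympForm L (![u, v, w, z] i) (![u, v, w, z] j) = J4 L i j := by
  have hv' : v ∉ (sympForm L).orthogonal ⊤ := by
    rw [LinearMap.BilinForm.orthogonal_top_eq_bot sympForm_nondegenerate]
    simpa using hv
  obtain ⟨w, -, hw⟩ := exists_pair_one hv'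
  have hzu : sympForm L z u = -1 := by rw [sympForm_swap, huz]
  have hvu : sympForm L v u = 0 := by rw [sympForm_swap, huv, neg_zero]
  have hvz : sympForm L v z = 0 := by rw [sympForm_swap, hzv, neg_zero]
  -- Project `w` onto the orthogonal of the plane spanned by `u` and `z`.
  refine ⟨w + sympForm L z w • u - sympForm L u w • z, symp_basis huz ?_ huv ?_ hzv ?_⟩
  · simp [hw, hvu, hvz]
  · simp [sympForm_self, huz]
  · simp [sympForm_self, hzu]

end

/-- If `σ : G → GSp₄(L)` is reducible then, after conjugation by some `T ∈ GL₄(L)`,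
its image lies in one of `B(L)`, `P(L)`, `Q(L)`, `H(L)`. -/
theorem stmt0 {G L : Type*} [Group G] [Field L] (h2 : (2 : L) ≠ 0)
    (σ : G →* (Matrix (Fin 4) (Fin 4) L)ˣ)
    (hσ : ∀ g : G, InGSp4 ((σ g : Matrix (Fin 4) (Fin 4) L)))
    (W : Submodule L (Fin 4 → L))
    (hinv : ∀ g : G, ∀ v ∈ W, (σ g : Matrix (Fin 4) (Fin 4) L).mulVec v ∈ W)
    (hW0 : 0 < Module.finrank L W) (hW4 : Module.finrank L W < 4) :
    ∃ T : (Matrix (Fin 4) (Fin 4) L)ˣ,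
      (∀ g : G, InGSp4 (conj4 T (σ g)) ∧ InB (conj4 T (σ g))) ∨
      (∀ g : G, InGSp4 (conj4 T (σ g)) ∧ InP (conj4 T (σ g))) ∨
      (∀ g : G, InGSp4 (conj4 T (σ g)) ∧ InQ (conj4 T (σ g))) ∨
      (∀ g : G, InGSp4 (conj4 T (σ g)) ∧ InH (conj4 T (σ g))) := by
  have hperp := orthogonal_stable σ hσ hinv
  set W' := (sympForm L).orthogonal W with hW'
  have ortho : ∀ x ∈ W, ∀ y ∈ W', sympForm L x y = 0 := fun x hx y hy =>
    LinearMap.BilinForm.mem_orthogonal_iff.mp hy x hx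
  have ortho' : ∀ x ∈ W', ∀ y ∈ W, sympForm L x y = 0 := fun x hx y hy => by
    rw [sympForm_swap, ortho y hy x hx, neg_zero]
  by_cases hR : W ⊓ W' = ⊥
  · -- `W` is nondegenerate: take hyperbolic pairs in `W` and in `W^⊥`.
    obtain ⟨u, hu, hu0⟩ := W.exists_mem_ne_zero_of_ne_bot (by rintro rfl; simp at hW0)
    obtain ⟨v, hv, hv0⟩ := W'.exists_mem_ne_zero_of_ne_bot (orthogonal_ne_bot hW4)
    have huW' : u ∉ W' := fun h => hu0 (by
      have : u ∈ W ⊓ W' := ⟨hu, h⟩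
      simpa [hR] using this)
    have hvW : v ∉ (sympForm L).orthogonal W' := by
      rw [hW', orthogonal_orthogonal_symp]
      intro h
      have : v ∈ W ⊓ W' := ⟨h, hv⟩
      exact hv0 (by simpa [hR] using this)
    obtain ⟨z, hz, huz⟩ := exists_pair_one huW'
    obtain ⟨w, hw, hvw⟩ := exists_pair_one hvW
    obtain ⟨T, hT⟩ := exists_conj ![u, v, w, z] (symp_basis huz hvw (ortho u hu v hv)
      (ortho u hu w hw) (ortho z hz v hv) (ortho z hz w hw))
    refine ⟨T, Or.inr (Or.inr (Or.inr fun g => ?_))⟩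
    obtain ⟨h1, h2⟩ := hT (σ g) (hσ g)
    refine ⟨h1, fun i j hij => h2 i j ?_⟩
    have gu := hinv g u hu
    have gz := hinv g z hz
    have gv := hperp g v hv
    have gw := hperp g w hw
    fin_cases i <;> fin_cases j <;> first
      | exact absurd (by decide) hij
      | exact ortho _ (by assumption) _ (by assumption)
      | exact ortho' _ (by assumption) _ (by assumption)
  · obtain ⟨u, hu, hu0⟩ := (W ⊓ W').exists_mem_ne_zero_of_ne_bot hR
    have hRinv : ∀ g : G, ∀ v ∈ W ⊓ W', (σ g : Matrix (Fin 4) (Fin 4) L) *ᵥ v ∈ W ⊓ W' :=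
      fun g v hv => ⟨hinv g v hv.1, hperp g v hv.2⟩
    by_cases hline : W ⊓ W' ≤ Submodule.span L {u}
    · -- The radical is the line spanned by `u`.
      have hspan : ∀ g : G, ∀ v ∈ Submodule.span L {u},
          (σ g : Matrix (Fin 4) (Fin 4) L) *ᵥ v ∈ Submodule.span L {u} := fun g v hv =>
        hline (hRinv g v ((Submodule.span_singleton_le_iff_mem u _).mpr hu hv))
      have hu_perp : u ∉ (sympForm L).orthogonal ⊤ := by
        rw [LinearMap.BilinForm.orthogonal_top_eq_bot sympForm_nondegenerate]
        simpa using hu0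
      obtain ⟨z, -, huz⟩ := exists_pair_one hu_perp
      have hfin : Module.finrank L (Submodule.span L {u, z}) < 4 := by
        classical
        have h := finrank_span_finset_le_card (R := L) (M := Fin 4 → L) {u, z}
        have h' := Finset.card_le_two (a := u) (b := z)
        rw [Set.finrank, Finset.coe_insert, Finset.coe_singleton] at h
        omega
      obtain ⟨v, hv, hv0⟩ := Submodule.exists_mem_ne_zero_of_ne_bot (orthogonal_ne_bot hfin)
      rw [LinearMap.BilinForm.mem_orthogonal_iff] at hv
      obtain ⟨w, hs⟩ := exists_fourth huz (hv u (Submodule.subset_span (by simp)))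
        (hv z (Submodule.subset_span (by simp))) hv0
      obtain ⟨T, hT⟩ := exists_conj _ hs
      refine ⟨T, Or.inr (Or.inr (Or.inl fun g => ?_))⟩
      obtain ⟨h1, h2⟩ := hT (σ g) (hσ g)
      have hu_span : u ∈ Submodule.span L {u} := Submodule.mem_span_singleton_self u
      have hcol : ∀ x, sympForm L x u = 0 →
          sympForm L x ((σ g : Matrix (Fin 4) (Fin 4) L) *ᵥ u) = 0 := by
        intro x hx
        obtain ⟨c, hc⟩ := Submodule.mem_span_singleton.mp (hspan g u hu_span)
        rw [← hc, map_smul, hx, smul_zero]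
      have hrow : ∀ x, sympForm L u x = 0 →
          sympForm L u ((σ g : Matrix (Fin 4) (Fin 4) L) *ᵥ x) = 0 := by
        intro x hx
        refine LinearMap.BilinForm.mem_orthogonal_iff.mp
          (orthogonal_stable σ hσ hspan g x ?_) u hu_span
        rw [LinearMap.BilinForm.mem_orthogonal_iff]
        intro n hn
        obtain ⟨c, rfl⟩ := Submodule.mem_span_singleton.mp hn
        simp [hx]
      exact ⟨h1, h2 1 0 (hcol _ (by simpa [J4] using hs 2 0)),
        h2 2 0 (hcol _ (by simpa [J4] using hs 1 0)),
        h2 3 0 (hcol _ (by simpa [J4] using hs 0 0)),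
        h2 3 1 (hrow _ (by simpa [J4] using hs 0 1)),
        h2 3 2 (hrow _ (by simpa [J4] using hs 0 2))⟩
    · -- The radical contains an isotropic plane.
      obtain ⟨v, hv, hvu⟩ := SetLike.not_le_iff_exists.mp hline
      have hv0 : v ≠ 0 := by rintro rfl; exact hvu (Submodule.zero_mem _)
      -- As `u` is not a multiple of `v`, some vector of `v^⊥` pairs to `1` with `u`.
      have hu' : u ∉ (sympForm L).orthogonal
          ((sympForm L).orthogonal (Submodule.span L {v})) := by
        rw [orthogonal_orthogonal_symp, Submodule.mem_span_singleton]
        rintro ⟨c, hc⟩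
        have hc0 : c ≠ 0 := by rintro rfl; exact hu0 (by rw [← hc, zero_smul])
        exact hvu (Submodule.mem_span_singleton.mpr ⟨c⁻¹, by rw [← hc, inv_smul_smul₀ hc0]⟩)
      obtain ⟨z, hz, huz⟩ := exists_pair_one hu'
      have hvz : sympForm L v z = 0 := LinearMap.BilinForm.mem_orthogonal_iff.mp hz v
        (Submodule.mem_span_singleton_self v)
      obtain ⟨w, hs⟩ := exists_fourth huz (ortho u hu.1 v hv.2)
        (by rw [sympForm_swap, hvz, neg_zero]) hv0
      obtain ⟨T, hT⟩ := exists_conj _ hs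
      refine ⟨T, Or.inr (Or.inl fun g => ?_)⟩
      obtain ⟨h1, h2⟩ := hT (σ g) (hσ g)
      refine ⟨h1, fun i j hi hj => h2 i j ?_⟩
      have gu := (hRinv g u hu).2
      have gv := (hRinv g v hv).2
      have hu1 := hu.1
      have hv1 := hv.1
      fin_cases i <;> fin_cases j <;> first
        | exact absurd hi (by decide)
        | exact absurd hj (by decide)
        | exact ortho _ (by assumption) _ (by assumption)
end

section
/- Let G be a group, L a field of characteristic different from 2, and σ : G → GSp₄(L) a group homomorphism. Suppose there exists a nonzero vector v ∈ L⁴ such that σ(g)v ∈ L·v for every g ∈ G (a one-dimensional invariant subspace). Then there exists T ∈ GL₄(L) such that Tσ(g)T⁻¹ ∈ Q(L) for every g ∈ G. -/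
/-!
The similitude group `GSp₄(L)` acts transitively on nonzero vectors: any `v ≠ 0` is the first
column of some `S ∈ GSp₄(L)` (`exists_gsp4_col`). Put `T = S⁻¹`. Then `M = T σ(g) T⁻¹` lies again in
`GSp₄(L)` and fixes the line spanned by the first basis vector `e₀`, so its first column is `c • e₀`.
A similitude preserving `L·e₀` also preserves the hyperplane orthogonal to `e₀`, which is spanned by
the first three basis vectors; this is the vanishing of the remaining two entries of the last row
(`inQ_of_col`).
-/

open Matrix

lemma InGSp4.mul {L : Type*} [Field L] {a b : Matrix (Fin 4) (Fin 4) L}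
    (ha : InGSp4 a) (hb : InGSp4 b) : InGSp4 (a * b) := by
  obtain ⟨x, hx⟩ := ha
  obtain ⟨y, hy⟩ := hb
  refine ⟨x * y, ?_⟩
  calc (a * b)ᵀ * J4 L * (a * b) = bᵀ * (aᵀ * J4 L * a) * b := by
        simp only [transpose_mul, Matrix.mul_assoc]
    _ = _ := by
        rw [hx, Matrix.mul_smul, Matrix.smul_mul, hy, smul_smul, Units.val_mul]

lemma InGSp4.units_inv {L : Type*} [Field L] {S : (Matrix (Fin 4) (Fin 4) L)ˣ}
    (hS : InGSp4 (S : Matrix (Fin 4) (Fin 4) L)) :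
    InGSp4 ((S⁻¹ : (Matrix (Fin 4) (Fin 4) L)ˣ) : Matrix (Fin 4) (Fin 4) L) := by
  obtain ⟨x, hx⟩ := hS
  refine ⟨x⁻¹, ?_⟩
  have h1 : (S : Matrix (Fin 4) (Fin 4) L) * (S⁻¹ : (Matrix (Fin 4) (Fin 4) L)ˣ) = 1 :=
    S.mul_inv
  have hJ : J4 L = ((x⁻¹ : Lˣ) : L) • ((S : Matrix (Fin 4) (Fin 4) L)ᵀ * J4 L * S) := by
    rw [hx, smul_smul, Units.inv_mul, one_smul]
  generalize ((S⁻¹ : (Matrix (Fin 4) (Fin 4) L)ˣ) : Matrix (Fin 4) (Fin 4) L) = R at h1 ⊢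
  have h2 : Rᵀ * (S : Matrix (Fin 4) (Fin 4) L)ᵀ = 1 := by
    rw [← transpose_mul, h1, transpose_one]
  calc Rᵀ * J4 L * R
      = ((x⁻¹ : Lˣ) : L) • ((Rᵀ * (S : Matrix (Fin 4) (Fin 4) L)ᵀ) * J4 L * (S * R)) := by
        conv_lhs => rw [hJ]
        simp only [Matrix.mul_smul, Matrix.smul_mul, Matrix.mul_assoc]
    _ = _ := by rw [h1, h2, Matrix.one_mul, Matrix.mul_one]

lemma J4_mul_self (L : Type*) [Field L] : J4 L * J4 L = -1 := by
  ext i j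
  fin_cases i <;> fin_cases j <;> simp [J4, Matrix.mul_apply, Fin.sum_univ_four]

lemma InGSp4.isUnit {L : Type*} [Field L] {m : Matrix (Fin 4) (Fin 4) L}
    (hm : InGSp4 m) : IsUnit m := by
  obtain ⟨x, hx⟩ := hm
  -- since `J² = -1`, the matrix `-x⁻¹ J mᵀ J` is a left inverse of `m`
  refine IsUnit.of_mul_eq_one_right (-((x⁻¹ : Lˣ) : L) • (J4 L * mᵀ * J4 L)) ?_
  have : J4 L * mᵀ * J4 L * m = J4 L * (mᵀ * J4 L * m) := by
    simp only [Matrix.mul_assoc]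
  rw [Matrix.smul_mul, this, hx, Matrix.mul_smul, J4_mul_self, smul_smul, neg_mul,
    Units.inv_mul, neg_smul, one_smul, neg_neg]

/-- Every nonzero vector is the first column of an element of `GSp₄(L)`. -/
lemma exists_gsp4_col {L : Type*} [Field L] (v : Fin 4 → L) (hv : v ≠ 0) :
    ∃ S : Matrix (Fin 4) (Fin 4) L, InGSp4 S ∧ ∀ i, S i 0 = v i := by
  obtain ⟨k, hk⟩ := Function.ne_iff.mp hv
  simp only [Pi.zero_apply] at hk
  -- For a nonzero coordinate `v k`, take as last column the basis vector (up to sign) pairing with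
  -- `v` to `v k`; the middle columns span the orthogonal complement of that hyperbolic plane.
  -- The similitude factor is `v k`.
  fin_cases k
  · have hk' : v 0 ≠ 0 := hk
    refine ⟨!![v 0, 0, 0, 0; v 1, 1, 0, 0; v 2, 0, v 0, 0; v 3, v 2 / v 0, -v 1, 1],
      ⟨Units.mk0 (v 0) hk', ?_⟩, fun i => by fin_cases i <;> rfl⟩
    ext i j
    fin_cases i <;> fin_cases j <;>
      simp [J4, Matrix.mul_apply, Fin.sum_univ_four] <;> field_simp <;> ring
  · have hk' : v 1 ≠ 0 := hk
    refine ⟨!![v 0, 1, 0, 0; v 1, 0, 0, 0; v 2, v 3 / v 1, -v 0, 1; v 3, 0, v 1, 0],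
      ⟨Units.mk0 (v 1) hk', ?_⟩, fun i => by fin_cases i <;> rfl⟩
    ext i j
    fin_cases i <;> fin_cases j <;>
      simp [J4, Matrix.mul_apply, Fin.sum_univ_four] <;> field_simp <;> ring
  · have hk' : v 2 ≠ 0 := hk
    refine ⟨!![v 0, 1, 0, 0; v 1, -v 3 / v 2, v 0, -1; v 2, 0, 0, 0; v 3, 0, v 2, 0],
      ⟨Units.mk0 (v 2) hk', ?_⟩, fun i => by fin_cases i <;> rfl⟩
    ext i j
    fin_cases i <;> fin_cases j <;>
      simp [J4, Matrix.mul_apply, Fin.sum_univ_four] <;> field_simp <;> ring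
  · have hk' : v 3 ≠ 0 := hk
    refine ⟨!![v 0, -v 2 / v 3, v 1, -1; v 1, 1, 0, 0; v 2, 0, v 3, 0; v 3, 0, 0, 0],
      ⟨Units.mk0 (v 3) hk', ?_⟩, fun i => by fin_cases i <;> rfl⟩
    ext i j
    fin_cases i <;> fin_cases j <;>
      simp [J4, Matrix.mul_apply, Fin.sum_univ_four] <;> field_simp <;> ring

/-- A similitude whose first column is a multiple of `e₀` is in the Klingen parabolic. -/
lemma inQ_of_col {L : Type*} [Field L] {m : Matrix (Fin 4) (Fin 4) L} (hm : InGSp4 m)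
    (h1 : m 1 0 = 0) (h2 : m 2 0 = 0) (h3 : m 3 0 = 0) : InQ m := by
  obtain ⟨x, hx⟩ := hm
  -- row 0 of `mᵀ J m` is `m 0 0` times row 3 of `m`
  have e1 := congrFun (congrFun hx 0) 1
  have e2 := congrFun (congrFun hx 0) 2
  have e3 := congrFun (congrFun hx 0) 3
  simp [J4, Matrix.mul_apply, Fin.sum_univ_four, h1, h2, h3] at e1 e2 e3
  have h0 : m 0 0 ≠ 0 := fun h => x.ne_zero (by rw [← e3, h, zero_mul])
  exact ⟨h1, h2, h3, e1.resolve_left h0, e2.resolve_left h0⟩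

/-- If `σ : G → GSp₄(L)` has a one-dimensional invariant subspace `L·v`, then after
conjugation by some `T ∈ GL₄(L)` its image lies in the Klingen parabolic `Q(L)`. -/
theorem stmt1 {G L : Type*} [Group G] [Field L] (h2 : (2 : L) ≠ 0)
    (σ : G →* (Matrix (Fin 4) (Fin 4) L)ˣ)
    (hσ : ∀ g : G, InGSp4 ((σ g : Matrix (Fin 4) (Fin 4) L)))
    (v : Fin 4 → L) (hv : v ≠ 0)
    (hinv : ∀ g : G, ∃ c : L, (σ g : Matrix (Fin 4) (Fin 4) L).mulVec v = c • v) :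
    ∃ T : (Matrix (Fin 4) (Fin 4) L)ˣ,
      ∀ g : G, InGSp4 (conj4 T (σ g)) ∧ InQ (conj4 T (σ g)) := by
  obtain ⟨S₀, hS, hcol⟩ := exists_gsp4_col v hv
  obtain ⟨S, rfl⟩ := hS.isUnit
  refine ⟨S⁻¹, fun g => ?_⟩
  have hM : InGSp4 (conj4 S⁻¹ (σ g)) := by
    simp only [conj4, inv_inv, Units.val_mul]
    exact (hS.units_inv.mul (hσ g)).mul hS
  obtain ⟨c, hc⟩ := hinv g
  have hSe : (S : Matrix (Fin 4) (Fin 4) L).mulVec (Pi.single 0 1) = v := by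
    rw [Matrix.mulVec_single_one]
    exact funext hcol
  have hSv : ((S⁻¹ : (Matrix (Fin 4) (Fin 4) L)ˣ) : Matrix (Fin 4) (Fin 4) L).mulVec v
      = Pi.single 0 1 := by
    rw [← hSe, Matrix.mulVec_mulVec, Units.inv_mul, Matrix.one_mulVec]
  have hMe : (conj4 S⁻¹ (σ g)).mulVec (Pi.single 0 1) = c • Pi.single 0 1 := by
    simp only [conj4, inv_inv, Units.val_mul]
    rw [← Matrix.mulVec_mulVec, hSe, ← Matrix.mulVec_mulVec, hc, Matrix.mulVec_smul, hSv]
  rw [Matrix.mulVec_single_one] at hMe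
  have hz : ∀ i : Fin 4, i ≠ 0 → conj4 S⁻¹ (σ g) i 0 = 0 := fun i hi => by
    simpa [hi] using congrFun hMe i
  exact ⟨hM, inQ_of_col hM (hz 1 (by decide)) (hz 2 (by decide)) (hz 3 (by decide))⟩
end

section
/- Let p be a prime, R a commutative ring with p·1 = 0, and n an integer with n ≥ 2 and n + 3 ≤ p. Then V(n)⊗V(2) is the internal direct sum W₀(n) ⊕ W₁(n) ⊕ W₂(n) of GL₂(R)-submodules; consequently there is an isomorphism of GL₂(R)-modules V(n)⊗V(2) ≅ V(n+2) ⊕ V(n,1) ⊕ V(n−2,2). -/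
/-!
Think of `V(n) ⊗ V(2)` as forms of bidegree `(n, 2)` in two pairs of variables `x`, `y`. The
transvectants `f ↦ (Ωʲ f)|_{y = x}`, with `Ω = ∂x₁∂y₂ - ∂x₂∂y₁` and `j = 0, 1, 2`, are equivariant
maps `V(n) ⊗ V(2) → V(n+2-2j, j)` over any commutative ring, because a linear substitution `g`
multiplies `Ω` by `det g` (`trans_actT`). On dehomogenized forms they are bidifferential
operators with constant coefficients, so they commute with the operator `E`, which becomes `d/dX`
(`Phi_Emap`).

The `k`-th transvectant kills `w_j` for `k ≠ j` and maps `w_j` to `1`, `n+2`, `2n(n+1)` times the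
top monomial for `k = j = 0, 1, 2` (`Phi_wvec`). Since `n + 2 < p`, these scalars are units, and
so are the falling factorials of `N = n + 2 - 2j` that arise when `E` is applied repeatedly to the
top monomial of degree `N`. Hence the `j`-th transvectant maps `W_j(n)` onto `V(n+2-2j)`
(`exists_mem_Wsub`) and kills the other two `W_k(n)`, so the three together form a surjection
`total` from `V(n) ⊗ V(2)` onto `V(n+2) ⊕ V(n,1) ⊕ V(n-2,2)`. Both sides are free of rank
`3(n+1)`, so `total` is an isomorphism. Under it `W_j(n)` corresponds to the `j`-th summand, which
gives stability under `GL₂(R)` and the internal direct sum decomposition.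
-/

open Matrix Polynomial

/-- The coefficient of `X^k` in `(aX+c)^i (bX+d)^(n-i)`, where `g = !![a,b;c,d]`:
this is the coefficient of the basis vector `u_k = e₁^k e₂^(n-k)` in `g · u_i`,
for the action `g·e₁ = a e₁ + c e₂`, `g·e₂ = b e₁ + d e₂` on `V(n) = Symⁿ St₂(R)`. -/
noncomputable def actCoeff {R : Type*} [CommRing R] (n : ℕ) (g : Matrix (Fin 2) (Fin 2) R)
    (i k : ℕ) : R :=
  ((C (g 0 0) * X + C (g 1 0)) ^ i * (C (g 0 1) * X + C (g 1 1)) ^ (n - i)).coeff k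

/-- The action of `g` on `V(n,m) = Symⁿ St₂(R) ⊗ detᵐ`, in coordinates with respect to
the basis `u_0, …, u_n`. -/
noncomputable def actV {R : Type*} [CommRing R] (n m : ℕ) (g : Matrix (Fin 2) (Fin 2) R)
    (v : Fin (n + 1) → R) : Fin (n + 1) → R :=
  fun k => g.det ^ m * ∑ i : Fin (n + 1), v i * actCoeff n g (i : ℕ) (k : ℕ)

/-- The action of a pair of matrices `(g, h)` on `V(n) ⊗ V(m)`, in coordinates with
respect to the basis `u_i ⊗ v_j` (taking `h = g` gives the diagonal `GL₂`-action). -/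
noncomputable def actT {R : Type*} [CommRing R] (n m : ℕ) (g h : Matrix (Fin 2) (Fin 2) R)
    (x : Fin (n + 1) → Fin (m + 1) → R) : Fin (n + 1) → Fin (m + 1) → R :=
  fun k l => ∑ i : Fin (n + 1), ∑ j : Fin (m + 1),
    x i j * actCoeff n g (i : ℕ) (k : ℕ) * actCoeff m h (j : ℕ) (l : ℕ)

/-- The operator `E` on `V(n) ⊗ V(2)`: the Leibniz extension of `E u_i = i·u_{i-1}`. -/
def Emap {R : Type*} [CommRing R] (n : ℕ) (x : Fin (n + 1) → Fin 3 → R) :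
    Fin (n + 1) → Fin 3 → R :=
  fun k l => ∑ i : Fin (n + 1), ∑ j : Fin 3, x i j *
    ((if (k : ℕ) + 1 = (i : ℕ) ∧ (l : ℕ) = (j : ℕ) then ((i : ℕ) : R) else 0) +
     (if (k : ℕ) = (i : ℕ) ∧ (l : ℕ) + 1 = (j : ℕ) then ((j : ℕ) : R) else 0))

/-- The operator `F` on `V(n) ⊗ V(2)`: the Leibniz extension of `F u_i = (n-i)·u_{i+1}`. -/
def Fmap {R : Type*} [CommRing R] (n : ℕ) (x : Fin (n + 1) → Fin 3 → R) :
    Fin (n + 1) → Fin 3 → R :=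
  fun k l => ∑ i : Fin (n + 1), ∑ j : Fin 3, x i j *
    ((if (k : ℕ) = (i : ℕ) + 1 ∧ (l : ℕ) = (j : ℕ) then ((n - (i : ℕ) : ℕ) : R) else 0) +
     (if (k : ℕ) = (i : ℕ) ∧ (l : ℕ) = (j : ℕ) + 1 then ((2 - (j : ℕ) : ℕ) : R) else 0))

/-- The vectors `w₀ = uₙ⊗v₂`, `w₁ = uₙ⊗v₁ − u_{n-1}⊗v₂`,
`w₂ = uₙ⊗v₀ − 2u_{n-1}⊗v₁ + u_{n-2}⊗v₂` in `V(n) ⊗ V(2)`. -/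
def wvec (R : Type*) [CommRing R] (n j : ℕ) : Fin (n + 1) → Fin 3 → R :=
  if j = 0 then
    fun i l => if (i : ℕ) = n ∧ (l : ℕ) = 2 then 1 else 0
  else if j = 1 then
    fun i l =>
      if (i : ℕ) = n ∧ (l : ℕ) = 1 then 1
      else if (i : ℕ) = n - 1 ∧ (l : ℕ) = 2 then -1 else 0
  else
    fun i l =>
      if (i : ℕ) = n ∧ (l : ℕ) = 0 then 1
      else if (i : ℕ) = n - 1 ∧ (l : ℕ) = 1 then -2
      else if (i : ℕ) = n - 2 ∧ (l : ℕ) = 2 then 1 else 0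

/-- `W_j(n) ⊆ V(n) ⊗ V(2)`: the `R`-span of `E^i w_j` for `0 ≤ i ≤ n + 2 - 2j`. -/
def Wsub (R : Type*) [CommRing R] (n j : ℕ) : Submodule R (Fin (n + 1) → Fin 3 → R) :=
  Submodule.span R {y | ∃ i ≤ n + 2 - 2 * j, y = (Emap n)^[i] (wvec R n j)}

namespace Transvectant

variable {R : Type*} [CommRing R]

/-! ### Transvectants of dehomogenized forms -/

/-- The `j`-th transvectant `Ωʲ(P ⊗ Q)`, restricted to the diagonal, of binary forms of degrees
`n` and `2`, in terms of their dehomogenizations `P`, `Q`; here `Ω = ∂x₁∂y₂ - ∂x₂∂y₁`. Only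
`j = 0, 1, 2` matter, and every `j ≥ 2` is given the formula for `j = 2`. -/
noncomputable def tau (n j : ℕ) : R[X] →ₗ[R] R[X] →ₗ[R] R[X] :=
  LinearMap.mk₂ R
    (fun P Q =>
      if j = 0 then P * Q
      else if j = 1 then 2 * derivative P * Q - (n : R[X]) * P * derivative Q
      else 2 * derivative (derivative P) * Q
        - 2 * ((n : R[X]) - 1) * derivative P * derivative Q
        + (n : R[X]) * ((n : R[X]) - 1) * P * derivative (derivative Q))
    (by intros; split_ifs <;> (try simp only [map_add]) <;> ring)
    (by intros; split_ifs <;> (try simp only [derivative_smul]) <;>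
      simp only [smul_eq_C_mul] <;> ring)
    (by intros; split_ifs <;> (try simp only [map_add]) <;> ring)
    (by intros; split_ifs <;> (try simp only [derivative_smul]) <;>
      simp only [smul_eq_C_mul] <;> ring)

lemma tau_zero (n : ℕ) (P Q : R[X]) : tau n 0 P Q = P * Q := rfl

lemma tau_one (n : ℕ) (P Q : R[X]) :
    tau n 1 P Q = 2 * derivative P * Q - (n : R[X]) * P * derivative Q := rfl

lemma tau_two (n : ℕ) (P Q : R[X]) :
    tau n 2 P Q = 2 * derivative (derivative P) * Q
        - 2 * ((n : R[X]) - 1) * derivative P * derivative Q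
        + (n : R[X]) * ((n : R[X]) - 1) * P * derivative (derivative Q) := rfl

/-- The coefficient of `X^(i+l-j)` in the `j`-th transvectant of `X^i` and `X^l`. -/
def cf (R : Type*) [CommRing R] (n j i l : ℕ) : R :=
  if j = 0 then 1
  else if j = 1 then 2 * (i : R) - n * l
  else 2 * (i * (i - 1)) - 2 * (n - 1) * i * l + n * (n - 1) * (l * (l - 1))

/-- The coefficient vanishes whenever one of the exponents `i + l - j` and `(n - i) + (2 - l) - j`
of the two variables in the homogeneous transvectant would be negative. -/
lemma cf_eq_zero_or {n j i l : ℕ} (hj : j ≤ 2) (hi : i ≤ n) (hl : l ≤ 2) :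
    cf R n j i l = 0 ∨ (j ≤ i + l ∧ j ≤ (n - i) + (2 - l)) := by
  obtain ⟨m, rfl⟩ := Nat.exists_eq_add_of_le hi
  simp only [Nat.add_sub_cancel_left]
  by_cases h : j ≤ i + l ∧ j ≤ m + (2 - l)
  · exact Or.inr h
  left
  interval_cases j <;> interval_cases l <;> rcases i with _ | _ | i <;> rcases m with _ | _ | m <;>
    first
    | (exfalso; omega)
    | (simp [cf]; done)
    | (simp [cf]; ring)

/-- Equivariance of the transvectant on monomials: if `A`, `B` are linear forms with leading
coefficients `a`, `b` and determinant `δ`, the `j`-th transvectant of `AⁱBᵐ` and `AˡB²⁻ˡ` is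
`δʲ` times the value at `(A, B)` of the transvectant of the corresponding monomials. -/
lemma tau_forms (A B : R[X]) (a b δ : R) (hA : derivative A = C a) (hB : derivative B = C b)
    (hδ : C a * B - C b * A = C δ) {j i m l : ℕ} (hj : j ≤ 2) (hl : l ≤ 2) :
    tau (i + m) j (A ^ i * B ^ m) (A ^ l * B ^ (2 - l)) =
      C (δ ^ j * cf R (i + m) j i l) * (A ^ (i + l - j) * B ^ (m + (2 - l) - j)) := by
  have h2 : C (2 : R) = 2 := rfl
  rw [C_mul, C_pow, ← hδ]
  interval_cases j
  · simp only [tau_zero, cf, Nat.sub_zero, if_true, map_one, pow_zero]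
    ring
  · rw [tau_one]
    interval_cases l <;> rcases i with _ | i <;> rcases m with _ | m <;>
      simp [cf, derivative_pow, hA, hB, h2] <;> ring
  · rw [tau_two]
    interval_cases l <;> rcases i with _ | _ | i <;> rcases m with _ | _ | m <;>
      simp [cf, derivative_pow, hA, hB, h2] <;> ring

lemma tau_X_pow {n j i l : ℕ} (hj : j ≤ 2) (hi : i ≤ n) (hl : l ≤ 2) :
    tau n j (X ^ i : R[X]) (X ^ l) = C (cf R n j i l) * X ^ (i + l - j) := by
  obtain ⟨m, rfl⟩ := Nat.exists_eq_add_of_le hi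
  have := tau_forms (X : R[X]) 1 1 0 1 (by simp) (by simp) (by simp) (i := i) (m := m) hj hl
  simpa using this

/-- Constant-coefficient bidifferential operators commute with infinitesimal translation. -/
lemma tau_derivative (n j : ℕ) (P Q : R[X]) :
    tau n j (derivative P) Q + tau n j P (derivative Q) = derivative (tau n j P Q) := by
  simp only [tau, LinearMap.mk₂_apply]
  split_ifs
  · simp
  · simp; ring
  · simp; ring

/-! ### Transvectants on the tensor product, the operator `E` and the vectors `w_j` -/

/-- The `j`-th transvectant as a linear map on `V(n) ⊗ V(2)`, with values in the
dehomogenized binary forms (`u_i` corresponds to `X^i`). -/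
noncomputable def Phi (n j : ℕ) : (Fin (n + 1) → Fin 3 → R) →ₗ[R] R[X] where
  toFun x := ∑ i : Fin (n + 1), ∑ l : Fin 3, x i l • tau n j (X ^ (i : ℕ)) (X ^ (l : ℕ))
  map_add' x y := by simp [add_smul, Finset.sum_add_distrib]
  map_smul' r x := by simp [mul_smul, Finset.smul_sum]

lemma Phi_apply (n j : ℕ) (x : Fin (n + 1) → Fin 3 → R) :
    Phi n j x = ∑ i : Fin (n + 1), ∑ l : Fin 3, x i l • tau n j (X ^ (i : ℕ)) (X ^ (l : ℕ)) := rfl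

lemma sum_coeff_X {n : ℕ} {P : R[X]} (hP : P.natDegree ≤ n) :
    ∑ i : Fin (n + 1), P.coeff i • (X ^ (i : ℕ) : R[X]) = P := by
  rw [Fin.sum_univ_eq_sum_range (fun i => P.coeff i • (X ^ i : R[X]))]
  conv_rhs => rw [P.as_sum_range' (n + 1) (by omega)]
  simp [smul_X_eq_monomial]

lemma Phi_tensor {n j : ℕ} {P Q : R[X]} (hP : P.natDegree ≤ n) (hQ : Q.natDegree ≤ 2) :
    Phi n j (fun k l => P.coeff k * Q.coeff l) = tau n j P Q := by
  conv_rhs => rw [← sum_coeff_X hP, ← sum_coeff_X hQ]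
  simp only [Phi_apply, map_sum, map_smul, LinearMap.sum_apply, LinearMap.smul_apply,
    Finset.smul_sum, mul_smul]
  rw [Finset.sum_comm]
  exact Finset.sum_congr rfl fun _ _ => Finset.sum_congr rfl fun _ _ => smul_comm _ _ _

lemma Phi_Emap (n j : ℕ) (x : Fin (n + 1) → Fin 3 → R) :
    Phi n j (Emap n x) = derivative (Phi n j x) := by
  have h : Emap n x = ∑ i : Fin (n + 1), ∑ l : Fin 3, x i l •
      ((fun (k : Fin (n + 1)) (l' : Fin 3) => (derivative (X ^ (i : ℕ) : R[X])).coeff k *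
          (X ^ (l : ℕ) : R[X]).coeff l')
        + fun (k : Fin (n + 1)) (l' : Fin 3) => (X ^ (i : ℕ) : R[X]).coeff k *
          (derivative (X ^ (l : ℕ) : R[X])).coeff l') := by
    ext k l'
    simp only [Emap, Finset.sum_apply, Pi.smul_apply, Pi.add_apply, smul_eq_mul]
    refine Finset.sum_congr rfl fun i _ => Finset.sum_congr rfl fun l _ => ?_
    congr 1
    simp only [coeff_derivative, coeff_X_pow]
    congr 1
    · by_cases h1 : (k : ℕ) + 1 = i
      · have hc : ((i : ℕ) : R) = (k : ℕ) + 1 := by rw [← h1]; push_cast; rfl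
        by_cases h2 : (l' : ℕ) = l <;> simp [h1, h2, hc]
      · simp [h1]
    · by_cases h1 : (l' : ℕ) + 1 = l
      · have hc : ((l : ℕ) : R) = (l' : ℕ) + 1 := by rw [← h1]; push_cast; rfl
        by_cases h2 : (k : ℕ) = i <;> simp [h1, h2, hc]
      · simp [h1]
  rw [h, Phi_apply n j x]
  simp only [map_sum, map_smul, map_add]
  refine Finset.sum_congr rfl fun i _ => Finset.sum_congr rfl fun l _ => ?_
  have hi : (X ^ (i : ℕ) : R[X]).natDegree ≤ n := (natDegree_X_pow_le _).trans (by omega)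
  have hl : (X ^ (l : ℕ) : R[X]).natDegree ≤ 2 := (natDegree_X_pow_le _).trans (by omega)
  rw [Phi_tensor ((natDegree_derivative_le _).trans (by omega)) hl,
    Phi_tensor hi ((natDegree_derivative_le _).trans (by omega)), tau_derivative]

lemma Phi_iterate (n j r : ℕ) (x : Fin (n + 1) → Fin 3 → R) :
    Phi n j ((Emap n)^[r] x) = derivative^[r] (Phi n j x) := by
  induction r with
  | zero => rfl
  | succ r ih => rw [Function.iterate_succ_apply', Function.iterate_succ_apply', Phi_Emap, ih]

/-- The scalar by which the `j`-th transvectant sends `w_j` to the top monomial. -/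
def kap (n j : ℕ) : ℕ := if j = 0 then 1 else if j = 1 then n + 2 else 2 * n * (n + 1)

/-- The transvectants separate the vectors `w_j`. -/
lemma Phi_wvec {n j k : ℕ} (hn : 2 ≤ n) (hj : j ≤ 2) (hk : k ≤ 2) :
    Phi n k (wvec R n j) = if k = j then C (kap n j : R) * X ^ (n + 2 - 2 * j) else 0 := by
  obtain ⟨m, rfl⟩ := Nat.exists_eq_add_of_le' hn
  have hne : ∀ i : Fin m, (i : ℕ) ≠ m + 2 ∧ (i : ℕ) ≠ m + 1 ∧ (i : ℕ) ≠ m := fun i => by omega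
  obtain ⟨T, hT⟩ : ∃ T : ℕ → ℕ → R[X], T = fun i l => tau (m + 2) k (X ^ i : R[X]) (X ^ l) :=
    ⟨_, rfl⟩
  have h : ∀ i ≤ m + 2, ∀ l ≤ 2, T i l = C (cf R (m + 2) k i l) * X ^ (i + l - k) :=
    fun i hi l hl => by rw [hT]; exact tau_X_pow hk hi hl
  have hx : Phi (m + 2) k (wvec R (m + 2) j) =
      ∑ i : Fin (m + 2 + 1), ∑ l : Fin 3, wvec R (m + 2) j i l • T i l := by rw [hT]; rfl
  rw [hx]
  simp only [Fin.sum_univ_castSucc (n := m + 2), Fin.sum_univ_castSucc (n := m + 1),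
    Fin.sum_univ_castSucc (n := m), Fin.sum_univ_three, wvec]
  have h2 : C (2 : R) = 2 := rfl
  clear hT hx
  interval_cases j
  · simp [hne, h]
    interval_cases k <;> simp [cf, kap] <;> ring
  · simp [hne, h]
    interval_cases k <;> simp [cf, kap, h2] <;> ring
  · simp [hne, h]
    interval_cases k <;> simp [cf, kap, h2, smul_eq_C_mul] <;> ring

/-! ### Integers that are units -/

lemma isUnit_natCast {p : ℕ} (hp : p.Prime) (hchar : (p : R) = 0) {m : ℕ} (h : ¬ p ∣ m) :
    IsUnit (m : R) := by
  obtain ⟨u, v, huv⟩ := Nat.isCoprime_iff_coprime.2 ((Nat.Prime.coprime_iff_not_dvd hp).2 h).symm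
  have := congrArg (Int.cast : ℤ → R) huv
  push_cast at this
  rw [hchar, mul_zero, add_zero] at this
  exact IsUnit.of_mul_eq_one_right _ this

lemma isUnit_kap {p n j : ℕ} (hp : p.Prime) (hchar : (p : R) = 0) (hn : 2 ≤ n)
    (hnp : n + 3 ≤ p) : IsUnit (kap n j : R) := by
  have small : ∀ m, 0 < m → m < p → ¬ p ∣ m := fun m h0 h1 => Nat.not_dvd_of_pos_of_lt h0 h1
  refine isUnit_natCast hp hchar ?_
  unfold kap
  split_ifs
  · exact small _ (by omega) (by omega)
  · exact small _ (by omega) (by omega)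
  · rw [hp.dvd_mul, hp.dvd_mul]
    rintro ((h | h) | h)
    · exact small _ (by omega) (by omega) h
    · exact small _ (by omega) (by omega) h
    · exact small _ (by omega) (by omega) h

/-! ### Equivariance -/

/-- The `j`-th transvectant in coordinates, as a map `V(n) ⊗ V(2) → V(N, j)`;
it is used for `N = n + 2 - 2j`. -/
noncomputable def trans (n j N : ℕ) : (Fin (n + 1) → Fin 3 → R) →ₗ[R] (Fin (N + 1) → R) :=
  LinearMap.pi fun k => lcoeff R k ∘ₗ Phi n j

lemma trans_apply (n j N : ℕ) (x : Fin (n + 1) → Fin 3 → R) (k : Fin (N + 1)) :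
    trans n j N x k = (Phi n j x).coeff k := rfl

lemma coeff_tau_forms {n j N : ℕ} (hj : j ≤ 2) (hN : N + 2 * j = n + 2)
    (g : Matrix (Fin 2) (Fin 2) R) {i l : ℕ} (hi : i ≤ n) (hl : l ≤ 2) (k : ℕ) :
    (tau n j ((C (g 0 0) * X + C (g 1 0)) ^ i * (C (g 0 1) * X + C (g 1 1)) ^ (n - i))
      ((C (g 0 0) * X + C (g 1 0)) ^ l * (C (g 0 1) * X + C (g 1 1)) ^ (2 - l))).coeff k =
    g.det ^ j * ∑ s : Fin (N + 1),
      (tau n j (X ^ i : R[X]) (X ^ l)).coeff s * actCoeff N g s k := by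
  have key := tau_forms (C (g 0 0) * X + C (g 1 0)) (C (g 0 1) * X + C (g 1 1)) (g 0 0) (g 0 1)
    g.det (by simp) (by simp) (by rw [Matrix.det_fin_two]; simp only [map_sub, map_mul]; ring)
    (i := i) (m := n - i) hj hl
  rw [Nat.add_sub_cancel' hi] at key
  rw [key, tau_X_pow hj hi hl]
  rcases cf_eq_zero_or (R := R) hj hi hl with h0 | ⟨h1, h2⟩
  · simp [h0]
  · rw [Finset.sum_eq_single (⟨i + l - j, by omega⟩ : Fin (N + 1))]
    · have e : n - i + (2 - l) - j = N - (i + l - j) := by omega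
      rw [coeff_C_mul, e]
      simp [actCoeff, mul_assoc]
    · intro s _ hs
      have : (s : ℕ) ≠ i + l - j := fun h => hs (Fin.ext h)
      simp [coeff_X_pow, this]
    · simp

lemma natDegree_forms (a b c d : R) {i n : ℕ} (hi : i ≤ n) :
    ((C a * X + C c) ^ i * (C b * X + C d) ^ (n - i)).natDegree ≤ n := by
  refine natDegree_mul_le.trans ?_
  have h1 := natDegree_pow_le_of_le i (natDegree_linear_le (a := a) (b := c))
  have h2 := natDegree_pow_le_of_le (n - i) (natDegree_linear_le (a := b) (b := d))
  omega

/-- The `j`-th transvectant is equivariant, with a twist by the `j`-th power of the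
determinant; invertibility of `g` is not needed. -/
lemma trans_actT {n j N : ℕ} (hj : j ≤ 2) (hN : N + 2 * j = n + 2)
    (g : Matrix (Fin 2) (Fin 2) R) (x : Fin (n + 1) → Fin 3 → R) :
    trans n j N (actT n 2 g g x) = actV N j g (trans n j N x) := by
  have hx : actT n 2 g g x = ∑ i : Fin (n + 1), ∑ l : Fin 3, x i l •
      fun (k : Fin (n + 1)) (l' : Fin 3) =>
        ((C (g 0 0) * X + C (g 1 0)) ^ (i : ℕ) *
          (C (g 0 1) * X + C (g 1 1)) ^ (n - (i : ℕ))).coeff k *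
        ((C (g 0 0) * X + C (g 1 0)) ^ (l : ℕ) *
          (C (g 0 1) * X + C (g 1 1)) ^ (2 - (l : ℕ))).coeff l' := by
    ext k l'
    simp only [actT, actCoeff, Finset.sum_apply, Pi.smul_apply, smul_eq_mul, mul_assoc]
  ext k
  -- the `k`-th coordinate of the action on `V(N, j)`, as a linear form in the polynomial
  let L : R[X] →ₗ[R] R := g.det ^ j • ∑ s : Fin (N + 1), actCoeff N g s k • lcoeff R s
  have hL : ∀ f : R[X], L f = g.det ^ j * ∑ s : Fin (N + 1), f.coeff s * actCoeff N g s k := by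
    intro f
    simp [L, mul_comm]
  have hR : actV N j g (trans n j N x) k = L (Phi n j x) := (hL _).symm
  rw [hR, trans_apply, hx, Phi_apply n j x]
  simp only [map_sum, map_smul, finsetSum_coeff, coeff_smul]
  refine Finset.sum_congr rfl fun i _ => Finset.sum_congr rfl fun l _ => ?_
  have hi : (i : ℕ) ≤ n := by omega
  have hl : (l : ℕ) ≤ 2 := by omega
  rw [Phi_tensor (natDegree_forms _ _ _ _ hi) (natDegree_forms _ _ _ _ hl), hL,
    coeff_tau_forms hj hN g hi hl]

/-! ### The submodules `W_j(n)` under the transvectants -/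

lemma Wsub_le_ker {n j k : ℕ} (hn : 2 ≤ n) (hj : j ≤ 2) (hk : k ≤ 2) (hkj : k ≠ j) :
    Wsub R n j ≤ LinearMap.ker (Phi n k) := by
  refine Submodule.span_le.2 ?_
  rintro _ ⟨r, -, rfl⟩
  simp [Phi_iterate, Phi_wvec hn hj hk, hkj]

lemma trans_eq_zero {n j k N : ℕ} (hn : 2 ≤ n) (hj : j ≤ 2) (hk : k ≤ 2) (hkj : k ≠ j)
    {x : Fin (n + 1) → Fin 3 → R} (hx : x ∈ Wsub R n j) : trans n k N x = 0 := by
  ext s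
  rw [trans_apply, LinearMap.mem_ker.1 (Wsub_le_ker hn hj hk hkj hx)]
  simp

/-- The `j`-th transvectant maps `W_j(n)` onto `V(n+2-2j)`: it sends `E^(N-s) w_j` to a multiple
of `u_s` by a scalar which is a product of integers prime to `p`. -/
lemma exists_mem_Wsub {p n j N : ℕ} (hp : p.Prime) (hchar : (p : R) = 0) (hn : 2 ≤ n)
    (hnp : n + 3 ≤ p) (hj : j ≤ 2) (hN : N + 2 * j = n + 2) (v : Fin (N + 1) → R) :
    ∃ y ∈ Wsub R n j, trans n j N y = v := by
  have hu : ∀ s : Fin (N + 1), ∃ u : R,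
      u * ((kap n j : R) * (N.descFactorial (N - s) : R)) = 1 := by
    intro s
    have h1 : IsUnit ((N.factorial : ℕ) : R) := by
      refine isUnit_natCast hp hchar ?_
      rw [hp.dvd_factorial]
      omega
    rw [← Nat.factorial_mul_descFactorial (Nat.sub_le N s), Nat.cast_mul] at h1
    obtain ⟨u, hu⟩ := ((isUnit_kap (j := j) hp hchar hn hnp).mul
      (isUnit_of_mul_isUnit_right h1)).exists_left_inv
    exact ⟨u, hu⟩
  choose u hu using hu
  refine ⟨∑ s : Fin (N + 1), (v s * u s) • (Emap n)^[N - s] (wvec R n j),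
    Submodule.sum_mem _ fun s _ => Submodule.smul_mem _ _
      (Submodule.subset_span ⟨N - s, by omega, rfl⟩), ?_⟩
  have hNj : n + 2 - 2 * j = N := by omega
  have hE : ∀ s : Fin (N + 1), trans n j N ((Emap n)^[N - s] (wvec R n j)) =
      Pi.single s ((kap n j : R) * (N.descFactorial (N - s) : R)) := by
    intro s
    ext k
    have hs : N - (N - (s : ℕ)) = s := by omega
    rw [trans_apply, Phi_iterate, Phi_wvec hn hj hj, if_pos rfl, hNj, iterate_derivative_C_mul,
      iterate_derivative_X_pow_eq_C_mul, hs, coeff_C_mul, coeff_C_mul, coeff_X_pow,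
      Pi.single_apply]
    by_cases h : k = s
    · simp [h]
    · simp [h, Fin.val_ne_of_ne h]
  ext k
  rw [map_sum, Finset.sum_apply, Finset.sum_eq_single k]
  · rw [map_smul, hE, Pi.smul_apply, Pi.single_eq_same, smul_eq_mul, mul_assoc, hu, mul_one]
  · intro s _ hs
    rw [map_smul, hE, Pi.smul_apply, Pi.single_eq_of_ne' hs, smul_zero]
  · simp

/-! ### The isomorphism and the internal direct sum -/

/-- The three transvectants together, as a map
`V(n) ⊗ V(2) → V(n+2) ⊕ V(n,1) ⊕ V(n-2,2)`. -/
noncomputable def total (R : Type*) [CommRing R] (n : ℕ) : (Fin (n + 1) → Fin 3 → R) →ₗ[R]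
    ((Fin (n + 2 + 1) → R) × (Fin (n + 1) → R) × (Fin (n - 2 + 1) → R)) :=
  (trans n 0 (n + 2)).prod ((trans n 1 n).prod (trans n 2 (n - 2)))

lemma total_apply (n : ℕ) (x : Fin (n + 1) → Fin 3 → R) :
    total R n x = (trans n 0 (n + 2) x, trans n 1 n x, trans n 2 (n - 2) x) := rfl

lemma exists_sum {p n : ℕ} (hp : p.Prime) (hchar : (p : R) = 0) (hn : 2 ≤ n) (hnp : n + 3 ≤ p)
    (v : (Fin (n + 2 + 1) → R) × (Fin (n + 1) → R) × (Fin (n - 2 + 1) → R)) :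
    ∃ y₀ ∈ Wsub R n 0, ∃ y₁ ∈ Wsub R n 1, ∃ y₂ ∈ Wsub R n 2, total R n (y₀ + y₁ + y₂) = v := by
  obtain ⟨v₀, v₁, v₂⟩ := v
  obtain ⟨y₀, h₀, rfl⟩ :=
    exists_mem_Wsub hp hchar hn hnp (by norm_num) (by omega : _ + 2 * 0 = _) v₀
  obtain ⟨y₁, h₁, rfl⟩ :=
    exists_mem_Wsub hp hchar hn hnp (by norm_num) (by omega : _ + 2 * 1 = _) v₁
  obtain ⟨y₂, h₂, rfl⟩ :=
    exists_mem_Wsub hp hchar hn hnp (by norm_num) (by omega : _ + 2 * 2 = _) v₂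
  refine ⟨y₀, h₀, y₁, h₁, y₂, h₂, ?_⟩
  have z : ∀ {j k N : ℕ} {x : Fin (n + 1) → Fin 3 → R}, x ∈ Wsub R n j → j ≤ 2 → k ≤ 2 → k ≠ j →
      trans n k N x = 0 := fun hx hj hk hkj => trans_eq_zero hn hj hk hkj hx
  simp [total_apply, z h₀, z h₁, z h₂]

lemma total_surjective {p n : ℕ} (hp : p.Prime) (hchar : (p : R) = 0) (hn : 2 ≤ n)
    (hnp : n + 3 ≤ p) : Function.Surjective (total R n) := by
  intro v
  obtain ⟨y₀, -, y₁, -, y₂, -, h⟩ := exists_sum hp hchar hn hnp v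
  exact ⟨_, h⟩

/-- A surjection between free modules of the same finite rank is injective, and
`(n+3) + (n+1) + (n-1) = 3(n+1)`. -/
lemma total_injective {p n : ℕ} (hp : p.Prime) (hchar : (p : R) = 0) (hn : 2 ≤ n)
    (hnp : n + 3 ≤ p) : Function.Injective (total R n) := by
  nontriviality R
  have e : (Fin (n + 1) → Fin 3 → R) ≃ₗ[R]
      ((Fin (n + 2 + 1) → R) × (Fin (n + 1) → R) × (Fin (n - 2 + 1) → R)) := by
    refine LinearEquiv.ofFinrankEq _ _ ?_
    simp only [Module.finrank_pi_fintype, Module.finrank_prod, Module.finrank_self, Finset.sum_const,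
      Finset.card_univ, Fintype.card_fin, smul_eq_mul]
    omega
  exact OrzechProperty.injective_of_surjective_of_injective e.toLinearMap _ e.injective
    (total_surjective hp hchar hn hnp)

lemma total_bijective {p n : ℕ} (hp : p.Prime) (hchar : (p : R) = 0) (hn : 2 ≤ n)
    (hnp : n + 3 ≤ p) : Function.Bijective (total R n) :=
  ⟨total_injective hp hchar hn hnp, total_surjective hp hchar hn hnp⟩

/-- `W_j(n)` is the common kernel of the transvectants of index different from `j`. -/
lemma mem_Wsub_iff {p n : ℕ} (hp : p.Prime) (hchar : (p : R) = 0) (hn : 2 ≤ n)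
    (hnp : n + 3 ≤ p) {j : ℕ} (hj : j ≤ 2) (x : Fin (n + 1) → Fin 3 → R) :
    x ∈ Wsub R n j ↔ ∀ k ≤ 2, k ≠ j → trans n k (n + 2 - 2 * k) x = 0 := by
  refine ⟨fun hx k hk hkj => trans_eq_zero hn hj hk hkj hx, fun h => ?_⟩
  obtain ⟨y, hy, hyx⟩ := exists_mem_Wsub hp hchar hn hnp hj
    (by omega : n + 2 - 2 * j + 2 * j = n + 2) (trans n j (n + 2 - 2 * j) x)
  have key : ∀ k ≤ 2, trans n k (n + 2 - 2 * k) y = trans n k (n + 2 - 2 * k) x := by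
    intro k hk
    by_cases hkj : k = j
    · rw [hkj, hyx]
    · rw [h k hk hkj, trans_eq_zero hn hj hk hkj hy]
  have : y = x := total_injective hp hchar hn hnp
    (Prod.ext (key 0 (by norm_num)) (Prod.ext (key 1 (by norm_num)) (key 2 le_rfl)))
  exact this ▸ hy

lemma isInternal {p n : ℕ} (hp : p.Prime) (hchar : (p : R) = 0) (hn : 2 ≤ n)
    (hnp : n + 3 ≤ p) : DirectSum.IsInternal (fun j : Fin 3 => Wsub R n (j : ℕ)) := by
  refine DirectSum.isInternal_submodule_of_iSupIndep_of_iSup_eq_top ?_ ?_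
  · intro j
    rw [Submodule.disjoint_def]
    intro x hx hx'
    have hle : ⨆ k, ⨆ (_ : k ≠ j), Wsub R n (k : ℕ) ≤ LinearMap.ker (Phi n (j : ℕ)) :=
      iSup₂_le fun k hk => Wsub_le_ker hn (by omega) (by omega)
        fun h => hk (Fin.ext h.symm)
    have key : ∀ k ≤ 2, ∀ N, trans n k N x = 0 := by
      intro k hk N
      by_cases hkj : k = j
      · ext s
        rw [trans_apply, hkj, LinearMap.mem_ker.1 (hle hx')]
        simp
      · exact trans_eq_zero hn (by omega) hk hkj hx
    refine total_injective hp hchar hn hnp ?_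
    rw [map_zero, total_apply, key 0 (by norm_num), key 1 (by norm_num), key 2 le_rfl]
    rfl
  · rw [eq_top_iff]
    intro x _
    obtain ⟨y₀, h₀, y₁, h₁, y₂, h₂, h⟩ := exists_sum hp hchar hn hnp (total R n x)
    rw [← total_injective hp hchar hn hnp h]
    have hle := le_iSup (fun j : Fin 3 => Wsub R n (j : ℕ))
    exact add_mem (add_mem (hle 0 h₀) (hle 1 h₁)) (hle 2 h₂)

end Transvectant

/-- For `2 ≤ n` and `n + 3 ≤ p`: `V(n) ⊗ V(2)` is the internal direct sum of the
`GL₂(R)`-submodules `W₀(n), W₁(n), W₂(n)`, and consequently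
`V(n) ⊗ V(2) ≅ V(n+2) ⊕ V(n,1) ⊕ V(n-2,2)` as `GL₂(R)`-modules. -/
theorem stmt5 {R : Type*} [CommRing R] (p : ℕ) (hp : p.Prime) (hchar : (p : R) = 0)
    (n : ℕ) (hn : 2 ≤ n) (hnp : n + 3 ≤ p) :
    (∀ j : Fin 3, ∀ g : (Matrix (Fin 2) (Fin 2) R)ˣ, ∀ x ∈ Wsub R n (j : ℕ),
        actT n 2 (g : Matrix (Fin 2) (Fin 2) R) (g : Matrix (Fin 2) (Fin 2) R) x
          ∈ Wsub R n (j : ℕ)) ∧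
    DirectSum.IsInternal (fun j : Fin 3 => Wsub R n (j : ℕ)) ∧
    ∃ φ : (Fin (n + 1) → Fin 3 → R) ≃ₗ[R]
        ((Fin (n + 2 + 1) → R) × (Fin (n + 1) → R) × (Fin (n - 2 + 1) → R)),
      ∀ g : (Matrix (Fin 2) (Fin 2) R)ˣ, ∀ x : Fin (n + 1) → Fin 3 → R,
        φ (actT n 2 (g : Matrix (Fin 2) (Fin 2) R) (g : Matrix (Fin 2) (Fin 2) R) x) =
          (actV (n + 2) 0 (g : Matrix (Fin 2) (Fin 2) R) (φ x).1,
           actV n 1 (g : Matrix (Fin 2) (Fin 2) R) (φ x).2.1,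
           actV (n - 2) 2 (g : Matrix (Fin 2) (Fin 2) R) (φ x).2.2) := by
  refine ⟨fun j g x hx => ?_, Transvectant.isInternal hp hchar hn hnp,
    LinearEquiv.ofBijective (Transvectant.total R n)
      (Transvectant.total_bijective hp hchar hn hnp), fun g x => ?_⟩
  · have hj : (j : ℕ) ≤ 2 := by omega
    rw [Transvectant.mem_Wsub_iff hp hchar hn hnp hj] at hx ⊢
    intro k hk hkj
    rw [Transvectant.trans_actT hk (by omega), hx k hk hkj]
    ext s
    simp [actV]
  · simp only [LinearEquiv.ofBijective_apply, Transvectant.total_apply]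
    rw [Transvectant.trans_actT (by norm_num) (by omega),
      Transvectant.trans_actT (by norm_num) (by omega),
      Transvectant.trans_actT (by norm_num) (by omega)]
end

section
/- With the notation of the context (twelve relations between the derivations ∇₁₁, ∇₁₂, ∇₂₂ and the elements a_{ij}, b_{ij}), one has ∇_{kl}(b_{ij}) = 0 for all 1 ≤ i, j ≤ 2 and all (k,l) ∈ {(1,1),(1,2),(2,2)}. -/
/-!
The relations do not mix the two columns of `A` and `B`, so it suffices to treat one column
`(a₁, a₂)`, `(b₁, b₂)`. There each derivative of `b₁` or `b₂` is, up to sign, a second derivative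
of `a₁` or `a₂`; commuting the two derivations brings it to one starting from
`∇₂₂ a₁ = 0` or `∇₁₁ a₂ = 0`, directly or after one further such step.
-/

/-- The claim for a single column of the matrices `A` and `B`. -/
theorem column_derivatives_eq_zero {O : Type*} [CommRing O]
    (D11 D12 D22 : Derivation ℤ O O)
    (hcomm1 : ∀ x : O, D11 (D12 x) = D12 (D11 x))
    (hcomm2 : ∀ x : O, D11 (D22 x) = D22 (D11 x))
    (hcomm3 : ∀ x : O, D12 (D22 x) = D22 (D12 x))
    (a1 a2 b1 b2 : O)
    (h1 : D11 a1 = -b1) (h2 : D12 a1 = -b2) (h3 : D22 a1 = 0)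
    (h4 : D11 a2 = 0) (h5 : D12 a2 = -b1) (h6 : D22 a2 = -b2) :
    (D11 b1 = 0 ∧ D12 b1 = 0 ∧ D22 b1 = 0) ∧
    (D11 b2 = 0 ∧ D12 b2 = 0 ∧ D22 b2 = 0) := by
  have e11 : D11 b1 = 0 := by simpa [h4, h5] using hcomm1 a2
  have e22 : D22 b1 = 0 := by simpa [h1, h3, eq_comm] using hcomm2 a1
  have f11 : D11 b2 = 0 := by simpa [h4, h6] using hcomm2 a2
  have f22 : D22 b2 = 0 := by simpa [h2, h3, eq_comm] using hcomm3 a1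
  -- The mixed derivatives satisfy `∇₁₂ b₁ = ∇₁₁ b₂` and `∇₁₂ b₂ = ∇₂₂ b₁`.
  have e12 : D12 b1 = 0 := by simpa [h1, h2, f11, eq_comm] using hcomm1 a1
  have f12 : D12 b2 = 0 := by simpa [h5, h6, e22] using hcomm3 a2
  exact ⟨⟨e11, e12, e22⟩, f11, f12, f22⟩

/-- Given pairwise commuting derivations `∇₁₁, ∇₁₂, ∇₂₂` on a commutative ring `O` and
elements `a_{ij}, b_{ij}` satisfying the twelve relations, all `∇_{kl}(b_{ij})` vanish. -/
theorem stmt11 {O : Type*} [CommRing O]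
    (D11 D12 D22 : Derivation ℤ O O)
    (hcomm1 : ∀ x : O, D11 (D12 x) = D12 (D11 x))
    (hcomm2 : ∀ x : O, D11 (D22 x) = D22 (D11 x))
    (hcomm3 : ∀ x : O, D12 (D22 x) = D22 (D12 x))
    (a11 a12 a21 a22 b11 b12 b21 b22 : O)
    (h1 : D11 a11 = -b11) (h2 : D12 a11 = -b21) (h3 : D22 a11 = 0)
    (h4 : D11 a12 = -b12) (h5 : D12 a12 = -b22) (h6 : D22 a12 = 0)
    (h7 : D11 a21 = 0) (h8 : D12 a21 = -b11) (h9 : D22 a21 = -b21)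
    (h10 : D11 a22 = 0) (h11 : D12 a22 = -b12) (h12 : D22 a22 = -b22) :
    (D11 b11 = 0 ∧ D12 b11 = 0 ∧ D22 b11 = 0) ∧
    (D11 b12 = 0 ∧ D12 b12 = 0 ∧ D22 b12 = 0) ∧
    (D11 b21 = 0 ∧ D12 b21 = 0 ∧ D22 b21 = 0) ∧
    (D11 b22 = 0 ∧ D12 b22 = 0 ∧ D22 b22 = 0) := by
  obtain ⟨p11, p21⟩ := column_derivatives_eq_zero D11 D12 D22 hcomm1 hcomm2 hcomm3
    a11 a21 b11 b21 h1 h2 h3 h7 h8 h9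
  obtain ⟨p12, p22⟩ := column_derivatives_eq_zero D11 D12 D22 hcomm1 hcomm2 hcomm3
    a12 a22 b12 b22 h4 h5 h6 h10 h11 h12
  exact ⟨p11, p12, p21, p22⟩
end

section
/- With the notation of the context, assume moreover that 2 is invertible in O, that det A is invertible in O, and set C = (c_{ij}) = BA⁻¹. Then: ∇₁₁(det A) = −c₁₁·det A, ∇₂₂(det A) = −c₂₂·det A, ∇₁₂(det A) = −(c₁₂ + c₂₁)·det A, and (∇₁₁∇₂₂ − (1/4)∇₁₂²)(det A) = (3/2)·det B. -/
/-!
By the Leibniz rule, the first derivatives of `det A` are bilinear in the entries of `A` and `B`,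
and they match `-cᵢⱼ · det A` by substituting `B = C A`. For the second-order operator, applying
commutativity of the derivations to the entries of `A` shows that `D11 bᵢⱼ` vanishes for `i = 2`
and `D12 bᵢⱼ` vanishes for all `i`, `j`. Hence only the entries of `A` are differentiated in the
second step, so `D11 (D22 (det A)) = det B` and `D12 (D12 (det A)) = -2 det B`; the total
is `(1 + 2/4) det B = (3/2) det B`.
-/


/-- With pairwise commuting derivations and the twelve relations, assuming `2` and
`det A` are invertible (with inverses `h`, `u`) and `C = (c_{ij}) = B A⁻¹` (encoded by
`C·A = B`): `∇₁₁(det A) = −c₁₁·det A`, `∇₂₂(det A) = −c₂₂·det A`,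
`∇₁₂(det A) = −(c₁₂+c₂₁)·det A`, and `(∇₁₁∇₂₂ − (1/4)∇₁₂²)(det A) = (3/2)·det B`. -/
theorem stmt12 {O : Type*} [CommRing O]
    (D11 D12 D22 : Derivation ℤ O O)
    (hcomm1 : ∀ x : O, D11 (D12 x) = D12 (D11 x))
    (hcomm2 : ∀ x : O, D11 (D22 x) = D22 (D11 x))
    (hcomm3 : ∀ x : O, D12 (D22 x) = D22 (D12 x))
    (a11 a12 a21 a22 b11 b12 b21 b22 : O)
    (h1 : D11 a11 = -b11) (h2 : D12 a11 = -b21) (h3 : D22 a11 = 0)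
    (h4 : D11 a12 = -b12) (h5 : D12 a12 = -b22) (h6 : D22 a12 = 0)
    (h7 : D11 a21 = 0) (h8 : D12 a21 = -b11) (h9 : D22 a21 = -b21)
    (h10 : D11 a22 = 0) (h11 : D12 a22 = -b12) (h12 : D22 a22 = -b22)
    (h : O) (hh : 2 * h = 1)
    (u : O) (hu : (a11 * a22 - a12 * a21) * u = 1)
    (c11 c12 c21 c22 : O)
    (hC11 : c11 * a11 + c12 * a21 = b11) (hC12 : c11 * a12 + c12 * a22 = b12)
    (hC21 : c21 * a11 + c22 * a21 = b21) (hC22 : c21 * a12 + c22 * a22 = b22) :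
    D11 (a11 * a22 - a12 * a21) = -(c11 * (a11 * a22 - a12 * a21)) ∧
    D22 (a11 * a22 - a12 * a21) = -(c22 * (a11 * a22 - a12 * a21)) ∧
    D12 (a11 * a22 - a12 * a21) = -((c12 + c21) * (a11 * a22 - a12 * a21)) ∧
    D11 (D22 (a11 * a22 - a12 * a21)) - h * h * D12 (D12 (a11 * a22 - a12 * a21)) =
      3 * h * (b11 * b22 - b12 * b21) := by
  -- `D11 b₂ⱼ = -D11 (D22 a₂ⱼ) = -D22 (D11 a₂ⱼ) = 0`.
  have e1 : D11 b21 = 0 := by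
    have := hcomm2 a21
    simpa [h7, h9] using this
  have e2 : D11 b22 = 0 := by
    have := hcomm2 a22
    simpa [h10, h12] using this
  -- `D22 b₁ⱼ = -D22 (D11 a₁ⱼ) = -D11 (D22 a₁ⱼ) = 0`.
  have e3 : D22 b11 = 0 := by
    have := (hcomm2 a11).symm
    simpa [h1, h3] using this
  have e4 : D22 b12 = 0 := by
    have := (hcomm2 a12).symm
    simpa [h4, h6] using this
  -- `D12 b₁ⱼ = -D12 (D11 a₁ⱼ) = -D11 (D12 a₁ⱼ) = D11 b₂ⱼ`, and `D12 b₂ⱼ = D22 b₁ⱼ` likewise.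
  have f1 : D12 b11 = 0 := by
    have := (hcomm1 a11).symm
    simpa [h1, h2, e1] using this
  have f2 : D12 b12 = 0 := by
    have := (hcomm1 a12).symm
    simpa [h4, h5, e2] using this
  have f3 : D12 b21 = 0 := by
    have := hcomm3 a21
    simpa [h8, h9, e3] using this
  have f4 : D12 b22 = 0 := by
    have := hcomm3 a22
    simpa [h11, h12, e4] using this
  have g1 : D11 (a11 * a22 - a12 * a21) = b12 * a21 - b11 * a22 := by
    simp only [map_sub, Derivation.leibniz, smul_eq_mul, h1, h4, h7, h10]
    ring
  have g2 : D22 (a11 * a22 - a12 * a21) = a12 * b21 - a11 * b22 := by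
    simp only [map_sub, Derivation.leibniz, smul_eq_mul, h3, h6, h9, h12]
    ring
  have g3 : D12 (a11 * a22 - a12 * a21) =
      (b22 * a21 - b21 * a22) + (a12 * b11 - a11 * b12) := by
    simp only [map_sub, Derivation.leibniz, smul_eq_mul, h2, h5, h8, h11]
    ring
  have k1 : D11 (a12 * b21 - a11 * b22) = b11 * b22 - b12 * b21 := by
    simp only [map_sub, Derivation.leibniz, smul_eq_mul, h1, h4, e1, e2]
    ring
  have k2 : D12 ((b22 * a21 - b21 * a22) + (a12 * b11 - a11 * b12)) =
      -2 * (b11 * b22 - b12 * b21) := by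
    simp only [map_add, map_sub, Derivation.leibniz, smul_eq_mul, h2, h5, h8, h11, f1, f2, f3, f4]
    ring
  refine ⟨?_, ?_, ?_, ?_⟩
  · rw [g1, ← hC11, ← hC12]
    ring
  · rw [g2, ← hC21, ← hC22]
    ring
  · rw [g3, ← hC11, ← hC12, ← hC21, ← hC22]
    ring
  · rw [g2, g3, k1, k2]
    -- With `2h = 1`, both `1 + 2h²` and `3h` equal `3/2`.
    linear_combination (b11 * b22 - b12 * b21) * (h - 1) * hh
end

section
/- With the notation of the context, assume moreover that det A is invertible in O, set C = (c_{ij}) = BA⁻¹, and assume c₁₂ = c₂₁. Then ∇₂₂(c₁₁) − ∇₁₂(c₁₂) + ∇₁₁(c₂₂) = −(det B)/(det A). -/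
/-!
Commutativity of the derivations, applied to the entries of `A`, forces every derivative of `B`
that occurs below to vanish. Differentiating `C * A = B` then gives `∇(C) * A = -C * ∇(A)`. The
relations say `∇₁₁(A) = -E₁₁ B`, `∇₁₂(A) = -(E₁₂ + E₂₁) B`, `∇₂₂(A) = -E₂₂ B` with matrix units
`Eᵢⱼ`. Since `B = C * A`, cancelling `A` (`row_cancel`) yields the Riccati equations
`∇₁₁(C) = C E₁₁ C`, `∇₁₂(C) = C (E₁₂ + E₂₁) C`, `∇₂₂(C) = C E₂₂ C`. Their entries give
`∇₂₂(c₁₁) = c₁₂ c₂₁ = ∇₁₁(c₂₂)` and `∇₁₂(c₁₂) = c₁₁ c₂₂ + c₁₂²`, so for symmetric `C` the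
alternating sum is `-det C`, and `det C = det B / det A`.
-/

/-- Right cancellation of an invertible `2 × 2` matrix from an equality of row vectors
`(p, q) A = (r, s) A`. -/
theorem row_cancel {O : Type*} [CommRing O] {a11 a12 a21 a22 u p q r s : O}
    (hu : (a11 * a22 - a12 * a21) * u = 1)
    (h1 : p * a11 + q * a21 = r * a11 + s * a21)
    (h2 : p * a12 + q * a22 = r * a12 + s * a22) : p = r ∧ q = s := by
  constructor
  · linear_combination (r - p) * hu + u * a22 * h1 - u * a21 * h2
  · linear_combination (s - q) * hu - u * a12 * h1 + u * a11 * h2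


/-- With pairwise commuting derivations and the twelve relations, assuming `det A` is
invertible (with inverse `u`), `C = (c_{ij}) = B A⁻¹` (encoded by `C·A = B`), and
`c₁₂ = c₂₁`: `∇₂₂(c₁₁) − ∇₁₂(c₁₂) + ∇₁₁(c₂₂) = −(det B)/(det A)`. -/
theorem stmt13 {O : Type*} [CommRing O]
    (D11 D12 D22 : Derivation ℤ O O)
    (hcomm1 : ∀ x : O, D11 (D12 x) = D12 (D11 x))
    (hcomm2 : ∀ x : O, D11 (D22 x) = D22 (D11 x))
    (hcomm3 : ∀ x : O, D12 (D22 x) = D22 (D12 x))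
    (a11 a12 a21 a22 b11 b12 b21 b22 : O)
    (h1 : D11 a11 = -b11) (h2 : D12 a11 = -b21) (h3 : D22 a11 = 0)
    (h4 : D11 a12 = -b12) (h5 : D12 a12 = -b22) (h6 : D22 a12 = 0)
    (h7 : D11 a21 = 0) (h8 : D12 a21 = -b11) (h9 : D22 a21 = -b21)
    (h10 : D11 a22 = 0) (h11 : D12 a22 = -b12) (h12 : D22 a22 = -b22)
    (u : O) (hu : (a11 * a22 - a12 * a21) * u = 1)
    (c11 c12 c21 c22 : O)
    (hC11 : c11 * a11 + c12 * a21 = b11) (hC12 : c11 * a12 + c12 * a22 = b12)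
    (hC21 : c21 * a11 + c22 * a21 = b21) (hC22 : c21 * a12 + c22 * a22 = b22)
    (hsym : c12 = c21) :
    D22 c11 - D12 c12 + D11 c22 = -((b11 * b22 - b12 * b21) * u) := by
  -- Each vanishing derivative of `B` comes from one commutation relation on an entry of `A`.
  have b11_22 : D22 b11 = 0 := by
    have := hcomm2 a11
    simpa [h1, h3] using this.symm
  have b12_22 : D22 b12 = 0 := by
    have := hcomm2 a12
    simpa [h4, h6] using this.symm
  have b21_11 : D11 b21 = 0 := by
    have := hcomm2 a21
    simpa [h7, h9] using this
  have b22_11 : D11 b22 = 0 := by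
    have := hcomm2 a22
    simpa [h10, h12] using this
  have b11_12 : D12 b11 = 0 := by
    have := hcomm1 a11
    simpa [h1, h2, b21_11] using this.symm
  have b12_12 : D12 b12 = 0 := by
    have := hcomm1 a12
    simpa [h4, h5, b22_11] using this.symm
  have e1 : D22 c11 = c12 * c21 := by
    have k1 := congrArg D22 hC11
    have k2 := congrArg D22 hC12
    simp only [map_add, Derivation.leibniz, smul_eq_mul, h3, h6, h9, h12, b11_22, b12_22]
      at k1 k2
    exact (row_cancel (q := D22 c12) (s := c12 * c22) hu
      (by linear_combination k1 - c12 * hC21) (by linear_combination k2 - c12 * hC22)).1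
  have e2 : D12 c12 = c11 * c22 + c12 * c12 := by
    have k1 := congrArg D12 hC11
    have k2 := congrArg D12 hC12
    simp only [map_add, Derivation.leibniz, smul_eq_mul, h2, h5, h8, h11, b11_12, b12_12]
      at k1 k2
    exact (row_cancel (p := D12 c11) (r := c11 * c21 + c12 * c11) hu
      (by linear_combination k1 - c11 * hC21 - c12 * hC11)
      (by linear_combination k2 - c11 * hC22 - c12 * hC12)).2
  have e3 : D11 c22 = c21 * c12 := by
    have k1 := congrArg D11 hC21
    have k2 := congrArg D11 hC22
    simp only [map_add, Derivation.leibniz, smul_eq_mul, h1, h4, h7, h10, b21_11, b22_11]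
      at k1 k2
    exact (row_cancel (p := D11 c21) (r := c21 * c11) hu
      (by linear_combination k1 - c21 * hC11) (by linear_combination k2 - c21 * hC12)).2
  -- `det B * u = det C * (det A * u) = det C`.
  have hdet : (b11 * b22 - b12 * b21) * u = c11 * c22 - c12 * c21 := by
    rw [← hC11, ← hC12, ← hC21, ← hC22]
    linear_combination (c11 * c22 - c12 * c21) * hu
  rw [e1, e2, e3, hdet, hsym]
  ring
end

section
/- With the notation of the context, assume moreover that 6 is invertible in O, that det A is invertible in O, set C = (c_{ij}) = BA⁻¹, and assume c₁₂ = c₂₁. Write D for the second-order operator ∇₁₁∇₂₂ − (1/4)∇₁₂². Then for every F ∈ O and every natural number k: det A · [ (2/3)·D(F) + F·( −(k/3)(∇₂₂(c₁₁) − ∇₁₂(c₁₂) + ∇₁₁(c₂₂)) + (2k(k−1)/3)(c₁₁c₂₂ − c₁₂²) ) + ((2k−1)/3)( c₁₂∇₁₂(F) − c₁₁∇₂₂(F) − c₂₂∇₁₁(F) ) ] = (2/3)·det A·D(F) + (2k(2k−1)/9)·F·D(det A) + ((2k−1)/3)·( ∇₁₁(F)∇₂₂(det A) − (1/2)∇₁₂(F)∇₁₂(det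 A) + ∇₂₂(F)∇₁₁(det A) ). -/
/-!
Let `d = det A`. The twelve relations give `∇₁₁d = -d c₁₁`, `∇₂₂d = -d c₂₂` and, since `C` is
symmetric, `∇₁₂d = -2 d c₁₂`; hence the terms with first derivatives of `F` agree.

For the terms proportional to `F`, commutativity of the derivations together with the relations
gives `∇₂₂b₁ⱼ = 0`, `∇₁₁b₂ⱼ = 0` and `∇₁₂bᵢⱼ = 0`. Consequently `∇₁₁∇₂₂d = det B` and
`∇₁₂²d = -2 det B`, so `D(d) = (3/2) det B`. Comparing with the Leibniz expansions of
`∇ᵢⱼ(d c)` yields `d (∇₂₂c₁₁ - ∇₁₂c₁₂ + ∇₁₁c₂₂) = -d det C`, and `det B = d det C`. Both sides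
then equal `(2k(2k-1)/6) F d det C`.
-/


/-- With pairwise commuting derivations and the twelve relations, assuming `6` and
`det A` are invertible (with inverses `w`, `u`), `C = (c_{ij}) = B A⁻¹` (encoded by
`C·A = B`), and `c₁₂ = c₂₁`, and writing `D = ∇₁₁∇₂₂ − (1/4)∇₁₂²`: for every `F ∈ O`
and natural number `k`,
`det A·[(2/3)D(F) + F·(−(k/3)(∇₂₂c₁₁ − ∇₁₂c₁₂ + ∇₁₁c₂₂) + (2k(k−1)/3)(c₁₁c₂₂ − c₁₂²))
 + ((2k−1)/3)(c₁₂∇₁₂F − c₁₁∇₂₂F − c₂₂∇₁₁F)]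
= (2/3)·det A·D(F) + (2k(2k−1)/9)·F·D(det A)
 + ((2k−1)/3)(∇₁₁F·∇₂₂(det A) − (1/2)∇₁₂F·∇₁₂(det A) + ∇₂₂F·∇₁₁(det A))`,
with `1/6 = w`, i.e. `1/3 = 2w`, `1/2 = 3w`, `2/3 = 4w`, `1/4 = (3w)²`, `1/9 = (2w)²`. -/
theorem stmt14 {O : Type*} [CommRing O]
    (D11 D12 D22 : Derivation ℤ O O)
    (hcomm1 : ∀ x : O, D11 (D12 x) = D12 (D11 x))
    (hcomm2 : ∀ x : O, D11 (D22 x) = D22 (D11 x))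
    (hcomm3 : ∀ x : O, D12 (D22 x) = D22 (D12 x))
    (a11 a12 a21 a22 b11 b12 b21 b22 : O)
    (h1 : D11 a11 = -b11) (h2 : D12 a11 = -b21) (h3 : D22 a11 = 0)
    (h4 : D11 a12 = -b12) (h5 : D12 a12 = -b22) (h6 : D22 a12 = 0)
    (h7 : D11 a21 = 0) (h8 : D12 a21 = -b11) (h9 : D22 a21 = -b21)
    (h10 : D11 a22 = 0) (h11 : D12 a22 = -b12) (h12 : D22 a22 = -b22)
    (w : O) (hw : 6 * w = 1)
    (u : O) (hu : (a11 * a22 - a12 * a21) * u = 1)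
    (c11 c12 c21 c22 : O)
    (hC11 : c11 * a11 + c12 * a21 = b11) (hC12 : c11 * a12 + c12 * a22 = b12)
    (hC21 : c21 * a11 + c22 * a21 = b21) (hC22 : c21 * a12 + c22 * a22 = b22)
    (hsym : c12 = c21) :
    ∀ (F : O) (k : ℕ),
      (a11 * a22 - a12 * a21) *
        (4 * w * (D11 (D22 F) - (3 * w) * (3 * w) * D12 (D12 F)) +
          F * (-((k : O) * (2 * w) * (D22 c11 - D12 c12 + D11 c22)) +
            2 * (k : O) * ((k : O) - 1) * (2 * w) * (c11 * c22 - c12 * c12)) +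
          (2 * (k : O) - 1) * (2 * w) *
            (c12 * D12 F - c11 * D22 F - c22 * D11 F)) =
      4 * w * (a11 * a22 - a12 * a21) *
          (D11 (D22 F) - (3 * w) * (3 * w) * D12 (D12 F)) +
        2 * (k : O) * (2 * (k : O) - 1) * (2 * w) * (2 * w) * F *
          (D11 (D22 (a11 * a22 - a12 * a21)) -
            (3 * w) * (3 * w) * D12 (D12 (a11 * a22 - a12 * a21))) +
        (2 * (k : O) - 1) * (2 * w) *
          (D11 F * D22 (a11 * a22 - a12 * a21) -
            (3 * w) * (D12 F * D12 (a11 * a22 - a12 * a21)) +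
            D22 F * D11 (a11 * a22 - a12 * a21)) := by
  intro F k
  subst hsym
  -- Second-order consequences of the relations: `∇₁₁b₂ⱼ`, `∇₂₂b₁ⱼ`, `∇₁₂bᵢⱼ` all vanish.
  have e1 : D22 b11 = 0 := by
    have := hcomm2 a11
    rw [h3, h1] at this; simpa using this.symm
  have e2 : D22 b12 = 0 := by
    have := hcomm2 a12
    rw [h6, h4] at this; simpa using this.symm
  have e3 : D11 b21 = 0 := by
    have := hcomm2 a21
    rw [h9, h7] at this; simpa using this
  have e4 : D11 b22 = 0 := by
    have := hcomm2 a22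
    rw [h12, h10] at this; simpa using this
  have f1 : D12 b11 = 0 := by
    have := hcomm1 a11
    rw [h2, h1] at this; simpa [e3] using this.symm
  have f2 : D12 b12 = 0 := by
    have := hcomm1 a12
    rw [h5, h4] at this; simpa [e4] using this.symm
  have f3 : D12 b21 = 0 := by
    have := hcomm3 a21
    rw [h9, h8] at this; simpa [e1] using this
  have f4 : D12 b22 = 0 := by
    have := hcomm3 a22
    rw [h12, h11] at this; simpa [e2] using this
  have g11 : D11 (a11 * a22 - a12 * a21) = -(b11 * a22 - b12 * a21) := by
    simp only [map_sub, Derivation.leibniz, smul_eq_mul, h1, h4, h7, h10]; ring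
  have g22 : D22 (a11 * a22 - a12 * a21) = -(b22 * a11 - b21 * a12) := by
    simp only [map_sub, Derivation.leibniz, smul_eq_mul, h3, h6, h9, h12]; ring
  have g12 : D12 (a11 * a22 - a12 * a21) =
      -(b21 * a22 + b12 * a11 - b22 * a21 - b11 * a12) := by
    simp only [map_sub, Derivation.leibniz, smul_eq_mul, h2, h5, h8, h11]; ring
  have q1 : D11 (D22 (a11 * a22 - a12 * a21)) = b11 * b22 - b12 * b21 := by
    rw [g22]
    simp only [map_neg, map_sub, Derivation.leibniz, smul_eq_mul, h1, h4, e3, e4]; ring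
  have q2 : D22 (D11 (a11 * a22 - a12 * a21)) = b11 * b22 - b12 * b21 := by
    rw [← hcomm2, q1]
  have q3 : D12 (D12 (a11 * a22 - a12 * a21)) = -2 * (b11 * b22 - b12 * b21) := by
    rw [g12]
    simp only [map_neg, map_sub, map_add, Derivation.leibniz, smul_eq_mul,
      h2, h5, h8, h11, f1, f2, f3, f4]
    ring
  have hB : b11 * b22 - b12 * b21 =
      (a11 * a22 - a12 * a21) * (c11 * c22 - c12 * c12) := by
    rw [← hC11, ← hC12, ← hC21, ← hC22]; ring
  have d11 : D11 (a11 * a22 - a12 * a21) = -((a11 * a22 - a12 * a21) * c11) := by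
    rw [g11, ← hC11, ← hC12]; ring
  have d22 : D22 (a11 * a22 - a12 * a21) = -((a11 * a22 - a12 * a21) * c22) := by
    rw [g22, ← hC21, ← hC22]; ring
  have d12 : D12 (a11 * a22 - a12 * a21) =
      -((a11 * a22 - a12 * a21) * c12 + (a11 * a22 - a12 * a21) * c12) := by
    rw [g12, ← hC11, ← hC12, ← hC21, ← hC22]; ring
  clear g11 g22 g12
  rw [q1, q3]
  generalize a11 * a22 - a12 * a21 = d at *
  rw [hB] at q1 q2 q3 ⊢
  rw [d22] at q1
  rw [d11] at q2
  rw [d12] at q3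
  simp only [map_neg, map_add, Derivation.leibniz, smul_eq_mul, d11, d22, d12] at q1 q2 q3
  rw [d11, d22, d12]
  -- `∇₁₂²d` produces `∇₁₂c₁₂` with coefficient `-2d`; halving uses `1/2 = 3w`.
  have hS : d * (D22 c11 - D12 c12 + D11 c22) = -(d * (c11 * c22 - c12 * c12)) := by
    linear_combination (-1 : O) * q1 - q2 + 3 * w * q3 +
      (d * D12 c12 - d * c12 * c12 - d * c11 * c22) * hw
  -- The `F`-terms differ by a multiple of `4w²(1 + 18w²) - w = w(6w - 1)(12w² + 2w + 1)`.
  linear_combination (-(F * k * (2 * w))) * hS -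
    (2 * (k : O) * (2 * k - 1) * F * d * (c11 * c22 - c12 * c12) * w *
      (12 * w ^ 2 + 2 * w + 1) + (2 * (k : O) - 1) * (2 * w) * d * c12 * D12 F) * hw
end
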